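/- Let P be a polynomial with integer coefficients of degree r ≥ 2 and let s be a nonzero integer. Then there exists a positive constant C, depending only on P and s, such that for all positive integers N, the number of integers n with N ≤ n < 2N for which there exists an integer x with s·n! = P(x) is at most C·N^(33/34). -/

import Mathlib

namespace PFS
open Polynomial

/-- One step of the twisted derivation. -/
noncomputable def stp {R : Type*} [CommRing R] (W ρ : R[X]) : ℕ → R[X] → R[X]
  | 0, A => A
  | k + 1, A => W * derivative (stp W ρ k A) + stp W ρ k A * ρ

lemma stp_zero_right {R : Type*} [CommRing R] (W ρ : R[X]) (k : ℕ) : stp W ρ k 0 = 0 := by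
  induction k with
  | zero => rfl
  | succ k ih => simp [stp, ih]

lemma stp_map {R S : Type*} [CommRing R] [CommRing S] (f : R →+* S) (W ρ A : R[X]) (k : ℕ) :
    (stp W ρ k A).map f = stp (W.map f) (ρ.map f) k (A.map f) := by
  induction k with
  | zero => rfl
  | succ k ih => simp [stp, ← ih, Polynomial.derivative_map]

lemma stp_natDegree {R : Type*} [CommRing R] (W ρ A : R[X]) (D H : ℕ) (hW : W.natDegree ≤ H)
    (hρ : ρ.natDegree ≤ H) (hA : A.natDegree ≤ D) (k : ℕ) :
    (stp W ρ k A).natDegree ≤ D + k * H := by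
  induction k with
  | zero => simpa [stp] using hA
  | succ k ih =>
    refine natDegree_add_le_of_degree_le ?_ ?_
    · refine natDegree_mul_le.trans ?_
      have := natDegree_derivative_le (stp W ρ k A)
      have e : (k+1)*H = k*H+H := by ring
      omega
    · refine natDegree_mul_le.trans ?_
      have e : (k+1)*H = k*H+H := by ring
      omega

/-- Nonvanishing of the Wronskian, kernel form. -/
lemma wronskian_ker {F : Type*} [Field F] {ι : Type*} [DecidableEq ι]
    (W : F[X]) (ρ A : ι → F[X])
    (hrel : ∀ i j, i ≠ j → ∀ l m : F[X], l ≠ 0 → m ≠ 0 →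
      W * (l * derivative m - derivative l * m) ≠ (ρ j - ρ i) * (l * m))
    (s : ℕ) : ∀ (S : Finset ι), S.card = s → (∀ i ∈ S, A i ≠ 0) → ∀ l : ι → F[X],
      (∀ k < s, ∑ i ∈ S, stp W (ρ i) k (A i) * l i = 0) → ∀ i ∈ S, l i = 0 := by
  induction s with
  | zero =>
    intro S hS _ l _ i hi
    rw [Finset.card_eq_zero] at hS
    simp [hS] at hi
  | succ s ih =>
    intro S hS hA l hl
    by_contra hcon
    push Not at hcon
    obtain ⟨i0, hi0, hl0⟩ := hcon
    -- the derived relation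
    set d : ι → F[X] := fun i => W * derivative (l i) - ρ i * l i with hd
    have h1 : ∀ k < s, ∑ i ∈ S, stp W (ρ i) k (A i) * d i = 0 := by
      intro k hk
      have e1 := hl k (by omega)
      have e2 := hl (k+1) (by omega)
      have e3 : W * derivative (∑ i ∈ S, stp W (ρ i) k (A i) * l i) = 0 := by
        rw [e1]; simp
      rw [derivative_sum, Finset.mul_sum] at e3
      have : ∑ i ∈ S, stp W (ρ i) k (A i) * d i =
        ∑ i ∈ S, W * derivative (stp W (ρ i) k (A i) * l i)
          - ∑ i ∈ S, stp W (ρ i) (k+1) (A i) * l i := by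
        rw [← Finset.sum_sub_distrib]
        refine Finset.sum_congr rfl fun i _ => ?_
        simp only [hd, stp, derivative_mul]
        ring
      rw [this, e3, e2, sub_zero]
    have h2 : ∀ i ∈ S.erase i0, l i0 * d i - d i0 * l i = 0 := by
      refine ih (S.erase i0) (by rw [Finset.card_erase_of_mem hi0]; omega)
        (fun i hi => hA i (Finset.mem_of_mem_erase hi)) (fun i => l i0 * d i - d i0 * l i) ?_
      intro k hk
      have e1 := hl k (by omega)
      have e2 := h1 k hk
      have : ∑ i ∈ S, stp W (ρ i) k (A i) * (l i0 * d i - d i0 * l i) = 0 := by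
        have : ∑ i ∈ S, stp W (ρ i) k (A i) * (l i0 * d i - d i0 * l i)
          = l i0 * ∑ i ∈ S, stp W (ρ i) k (A i) * d i
            - d i0 * ∑ i ∈ S, stp W (ρ i) k (A i) * l i := by
          rw [Finset.mul_sum, Finset.mul_sum, ← Finset.sum_sub_distrib]
          refine Finset.sum_congr rfl fun i _ => ?_
          ring
        rw [this, e1, e2]; simp
      rw [← Finset.add_sum_erase S _ hi0] at this
      rw [← this]
      ring
    have h3 : ∀ i ∈ S.erase i0, l i = 0 := by
      intro i hi
      by_contra hli
      have e := h2 i hi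
      refine hrel i0 i (Finset.ne_of_mem_erase hi).symm (l i0) (l i) hl0 hli ?_
      simp only [hd] at e
      linear_combination e
    have h4 := hl 0 (by omega)
    rw [← Finset.add_sum_erase S _ hi0, Finset.sum_eq_zero (s := S.erase i0)] at h4
    · simp only [stp, add_zero, mul_eq_zero] at h4
      rcases h4 with h | h
      · exact hA i0 hi0 h
      · exact hl0 h
    · intro i hi
      rw [h3 i hi, mul_zero]

lemma pow_dvd_of_derivative {F : Type*} [Field F] [CharZero F] (f : F[X]) (z : F) (t : ℕ)
    (h0 : f.eval z = 0) (h : (X - C z) ^ t ∣ derivative f) : (X - C z) ^ (t + 1) ∣ f := by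
  by_cases hf : f = 0
  · simp [hf]
  have hd : derivative f ≠ 0 := by
    intro h'
    have := derivative_eq_zero.1 h'
    rw [natDegree_eq_zero] at this
    obtain ⟨c, rfl⟩ := this
    simp at h0
    simp [h0] at hf
  rw [← le_rootMultiplicity_iff hd, derivative_rootMultiplicity_of_root h0] at h
  rw [← le_rootMultiplicity_iff hf]
  have : 0 < f.rootMultiplicity z := (rootMultiplicity_pos hf).2 h0
  omega

lemma local_section {F : Type*} [Field F] [CharZero F] (W ρ : F[X]) (z v : F)
    (hW : W.eval z ≠ 0) (K : ℕ) : ∃ l : F[X], l.eval z = v ∧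
      (X - C z) ^ K ∣ W * derivative l - ρ * l := by
  induction K with
  | zero => exact ⟨C v, by simp, by simp⟩
  | succ K ih =>
    obtain ⟨l, hl, q, hq⟩ := ih
    set c : F := - q.eval z / ((K + 1) * W.eval z) with hc
    have hK : (K + 1 : F) ≠ 0 := by exact_mod_cast Nat.succ_ne_zero K
    refine ⟨l + C c * (X - C z) ^ (K + 1), by simp [hl], ?_⟩
    have e : W * derivative (l + C c * (X - C z) ^ (K + 1)) - ρ * (l + C c * (X - C z) ^ (K + 1))
        = (X - C z) ^ K * (q + C (c * (K + 1)) * W - ρ * C c * (X - C z)) := by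
      have e' : W * derivative (l + C c * (X - C z) ^ (K + 1)) - ρ * (l + C c * (X - C z) ^ (K + 1))
        = (W * derivative l - ρ * l) + W * C c * derivative ((X - C z) ^ (K + 1))
          - ρ * C c * (X - C z) ^ (K + 1) := by
        simp only [derivative_add, derivative_C_mul]; ring
      rw [e', hq, derivative_X_sub_C_pow]
      simp only [Nat.add_sub_cancel, map_mul, map_add, map_natCast, map_one, Nat.cast_add,
        Nat.cast_one]
      ring
    rw [e, pow_succ]
    refine mul_dvd_mul_left _ ?_
    rw [dvd_iff_isRoot]
    simp only [IsRoot.def, eval_sub, eval_add, eval_mul, eval_C, eval_X, sub_self, mul_zero,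
      sub_zero]
    rw [hc]
    field_simp
    ring

lemma det_dvd {F : Type*} [Field F] [CharZero F] {ι : Type*} [Fintype ι] [DecidableEq ι]
    (W : F[X]) (ρ A : ι → F[X]) (z : F) (hW : W.eval z ≠ 0) (v : ι → F) (i0 : ι) (hv : v i0 ≠ 0)
    (K : ℕ) (e : ι ≃ Fin (Fintype.card ι))
    (h : ∀ k < Fintype.card ι + K, ∑ i, (stp W (ρ i) k (A i)).eval z * v i = 0) :
    (X - C z) ^ (K + 1) ∣
      (Matrix.of fun i j => stp W (ρ j) (e i : ℕ) (A j)).det := by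
  obtain ⟨s, hs⟩ : ∃ s, s = Fintype.card ι := ⟨_, rfl⟩
  rw [← hs] at h
  choose l hl hl' using fun i => local_section W (ρ i) z (v i) hW (K)
  have key : ∀ t ≤ K, ∀ k, k + t < s + K →
      (X - C z) ^ (t + 1) ∣ ∑ i, stp W (ρ i) k (A i) * l i := by
    have h0 : ∀ k < s + K, (∑ i, stp W (ρ i) k (A i) * l i).eval z = 0 := by
      intro k hk
      rw [eval_finsetSum, ← h k hk]
      refine Finset.sum_congr rfl fun i _ => ?_
      rw [eval_mul, hl]
    intro t
    induction t with
    | zero =>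
      intro _ k hk
      rw [zero_add, pow_one, dvd_iff_isRoot]
      exact h0 k (by omega)
    | succ t ih =>
      intro ht k hk
      refine pow_dvd_of_derivative _ _ _ (h0 k (by omega)) ?_
      have h1 := ih (by omega) (k+1) (by omega)
      have hcop : IsCoprime ((X - C z) ^ (t+1)) W := by
        refine IsCoprime.pow_left ?_
        refine (Irreducible.coprime_iff_not_dvd (irreducible_X_sub_C z)).2 ?_
        rw [dvd_iff_isRoot]; exact hW
      refine hcop.dvd_of_dvd_mul_left ?_
      have : W * derivative (∑ i, stp W (ρ i) k (A i) * l i) =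
        ∑ i, stp W (ρ i) (k+1) (A i) * l i +
          ∑ i, stp W (ρ i) k (A i) * (W * derivative (l i) - ρ i * l i) := by
        rw [derivative_sum, Finset.mul_sum, ← Finset.sum_add_distrib]
        refine Finset.sum_congr rfl fun i _ => ?_
        simp only [stp, derivative_mul]
        ring
      rw [this]
      refine dvd_add h1 (Finset.dvd_sum fun i _ => ?_)
      exact Dvd.dvd.mul_left ((pow_dvd_pow _ ht).trans (hl' i)) _
  set M : Matrix ι ι F[X] := Matrix.of fun i j => stp W (ρ j) (e i : ℕ) (A j) with hM
  have h1 : ∀ i, (X - C z) ^ (K + 1) ∣ (M.mulVec l) i := by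
    intro i
    have := key K le_rfl (e i) (by have := (e i).2; omega)
    simpa [Matrix.mulVec, dotProduct, hM] using this
  have h2 : (X - C z) ^ (K + 1) ∣ M.det * l i0 := by
    have : (M.adjugate.mulVec (M.mulVec l)) i0 = M.det * l i0 := by
      rw [Matrix.mulVec_mulVec, Matrix.adjugate_mul]
      simp [Matrix.smul_mulVec]
    rw [← this]
    simp only [Matrix.mulVec, dotProduct]
    refine Finset.dvd_sum fun j _ => Dvd.dvd.mul_left (h1 j) _
  have hcop : IsCoprime ((X - C z) ^ (K+1)) (l i0) := by
    refine IsCoprime.pow_left ?_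
    refine (Irreducible.coprime_iff_not_dvd (irreducible_X_sub_C z)).2 ?_
    rw [dvd_iff_isRoot]; simpa [hl] using hv
  exact hcop.dvd_of_dvd_mul_right h2

lemma det_natDegree {R : Type*} [CommRing R] {ι : Type*} [Fintype ι] [DecidableEq ι]
    (M : Matrix ι ι R[X]) (B : ℕ) (h : ∀ i j, (M i j).natDegree ≤ B) :
    M.det.natDegree ≤ Fintype.card ι * B := by
  rw [Matrix.det_apply]
  refine natDegree_sum_le_of_forall_le _ _ fun σ _ => ?_
  refine (natDegree_smul_le _ _).trans ?_
  refine (natDegree_prod_le _ _).trans ?_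
  refine (Finset.sum_le_card_nsmul _ _ B fun i _ => h _ _).trans ?_
  simp

/-- zero estimate, all components nonzero. -/
lemma zero_est_aux {F : Type*} [Field F] [CharZero F] {ι : Type*} [Fintype ι] [DecidableEq ι]
    [Nonempty ι]
    (W : F[X]) (ρ A : ι → F[X])
    (hrel : ∀ i j, i ≠ j → ∀ l m : F[X], l ≠ 0 → m ≠ 0 →
      W * (l * derivative m - derivative l * m) ≠ (ρ j - ρ i) * (l * m))
    (hA : ∀ i, A i ≠ 0) (D H K : ℕ) (hWd : W.natDegree ≤ H) (hρd : ∀ i, (ρ i).natDegree ≤ H)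
    (hAd : ∀ i, (A i).natDegree ≤ D) (Z : Finset F) (hZ : ∀ z ∈ Z, W.eval z ≠ 0)
    (v : F → ι → F) (hv : ∀ z ∈ Z, ∀ i, v z i ≠ 0)
    (hK : Fintype.card ι * (D + Fintype.card ι * H) < Z.card * (K + 1)) :
    ∃ z ∈ Z, ∃ k < Fintype.card ι + K, ∑ i, (stp W (ρ i) k (A i)).eval z * v z i ≠ 0 := by
  by_contra hcon
  push Not at hcon
  set e := Fintype.equivFin ι
  set M : Matrix ι ι F[X] := Matrix.of fun i j => stp W (ρ j) (e i : ℕ) (A j) with hM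
  have hdet : M.det ≠ 0 := by
    intro h0
    obtain ⟨l, hl, hl'⟩ := Matrix.exists_mulVec_eq_zero_iff.2 h0
    refine hl (funext fun i => ?_)
    refine wronskian_ker W ρ A hrel (Fintype.card ι) Finset.univ Finset.card_univ
      (fun i _ => hA i) l ?_ i (Finset.mem_univ _)
    intro k hk
    have := congrFun hl' (e.symm ⟨k, hk⟩)
    simpa [Matrix.mulVec, dotProduct, hM] using this
  have hdvd : ∏ z ∈ Z, (X - C z) ^ (K + 1) ∣ M.det := by
    refine Finset.prod_dvd_of_coprime ?_ ?_
    · intro a ha b hb hab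
      exact IsCoprime.pow (isCoprime_X_sub_C_of_isUnit_sub (sub_ne_zero.2 hab).isUnit)
    · intro z hz
      exact det_dvd W ρ A z (hZ z hz) (v z) (Classical.arbitrary ι) (hv z hz _) K e (hcon z hz)
  have h1 := natDegree_le_of_dvd hdvd hdet
  rw [natDegree_prod_of_monic _ _ (fun z _ => (monic_X_sub_C z).pow _)] at h1
  simp only [natDegree_pow, natDegree_X_sub_C, mul_one, Finset.sum_const, smul_eq_mul] at h1
  have h2 : M.det.natDegree ≤ Fintype.card ι * (D + Fintype.card ι * H) := by
    refine det_natDegree M _ fun i j => ?_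
    refine (stp_natDegree W (ρ j) (A j) D H hWd (hρd j) (hAd j) (e i)).trans ?_
    have := (e i).2
    gcongr
  omega

/-- zero estimate. -/
lemma zero_est {F : Type*} [Field F] [CharZero F] {ι : Type*} [Fintype ι] [DecidableEq ι]
    (W : F[X]) (ρ A : ι → F[X])
    (hrel : ∀ i j, i ≠ j → ∀ l m : F[X], l ≠ 0 → m ≠ 0 →
      W * (l * derivative m - derivative l * m) ≠ (ρ j - ρ i) * (l * m))
    (hA : ∃ i, A i ≠ 0) (D H K : ℕ) (hWd : W.natDegree ≤ H) (hρd : ∀ i, (ρ i).natDegree ≤ H)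
    (hAd : ∀ i, (A i).natDegree ≤ D) (Z : Finset F) (hZ : ∀ z ∈ Z, W.eval z ≠ 0)
    (v : F → ι → F) (hv : ∀ z ∈ Z, ∀ i, v z i ≠ 0)
    (hK : Fintype.card ι * (D + Fintype.card ι * H) < Z.card * (K + 1)) :
    ∃ z ∈ Z, ∃ k < Fintype.card ι + K, ∑ i, (stp W (ρ i) k (A i)).eval z * v z i ≠ 0 := by
  classical
  obtain ⟨i0, hi0⟩ := hA
  let ι' := {i : ι // A i ≠ 0}
  have : Nonempty ι' := ⟨⟨i0, hi0⟩⟩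
  have hc : Fintype.card ι' ≤ Fintype.card ι := Fintype.card_subtype_le _
  obtain ⟨z, hz, k, hk, hne⟩ := zero_est_aux (ι := ι') W (fun i => ρ i) (fun i => A i)
    (fun i j hij => hrel i j (fun h => hij (Subtype.ext h))) (fun i => i.2) D H K hWd
    (fun i => hρd i) (fun i => hAd i) Z hZ (fun z i => v z i) (fun z hz i => hv z hz i)
    (lt_of_le_of_lt (by gcongr) hK)
  refine ⟨z, hz, k, by omega, ?_⟩
  convert hne using 1
  rw [← Finset.sum_subtype (p := fun i => A i ≠ 0) (Finset.univ.filter fun i => A i ≠ 0)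
    (by simp) (fun i => (stp W (ρ i) k (A i)).eval z * v z i), Finset.sum_filter_of_ne]
  intro i _ hi h0
  apply hi
  rw [h0, stp_zero_right]; simp

end PFS


namespace PFS
open PowerSeries

lemma exists_rat_root (r : ℕ) (hr : r ≠ 0) : ∃ F : ℚ⟦X⟧, F ^ r = 1 + C ((r:ℚ)^2) * X ∧
    constantCoeff F = 1 := by
  have key : ∀ n : ℕ, PowerSeries.binomialSeries ℚ ((n:ℚ) * (1 / r : ℚ)) = PowerSeries.binomialSeries ℚ (1 / r : ℚ) ^ n := by
    intro n
    induction n with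
    | zero => simp
    | succ n ih =>
      rw [pow_succ, ← ih, ← PowerSeries.binomialSeries_add]
      congr 1
      push_cast; ring
  refine ⟨rescale ((r:ℚ)^2) (PowerSeries.binomialSeries ℚ (1 / r : ℚ)), ?_, ?_⟩
  · rw [← map_pow, ← key, mul_one_div_cancel (by exact_mod_cast hr)]
    have := PowerSeries.binomialSeries_nat (R := ℚ) (A := ℚ) 1
    rw [Nat.cast_one] at this
    rw [this, pow_one, map_add, map_one, rescale_X]
  · rw [← coeff_zero_eq_constantCoeff_apply, coeff_rescale]
    simp

lemma exists_int_root (r : ℕ) (hr : r ≠ 0) : ∃ f : ℤ⟦X⟧, f ^ r = 1 + C ((r:ℤ)^2) * X ∧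
    constantCoeff f = 1 := by
  obtain ⟨F, hF, hF0⟩ := exists_rat_root r hr
  have hr' : (r:ℚ) ≠ 0 := by exact_mod_cast hr
  have key : ∀ l, 1 ≤ l → ∃ c : ℤ, coeff l F = r * c := by
    intro l
    induction l using Nat.strong_induction_on with
    | _ l ih =>
    intro hl
    have : ∃ c : ℕ → ℤ, ∀ l' < l, 1 ≤ l' → coeff l' F = r * c l' := by
      choose! c hc using ih
      exact ⟨c, hc⟩
    obtain ⟨c, hc⟩ := this
    set g : ℤ⟦X⟧ := mk fun i => if i < l ∧ 1 ≤ i then c i else 0 with hg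
    have h1 : X ^ l ∣ F - map (Int.castRingHom ℚ) (1 + C (r:ℤ) * g) := by
      rw [X_pow_dvd_iff]
      intro m hm
      rw [map_sub, coeff_map, map_add, coeff_C_mul, hg, coeff_mk]
      by_cases hm0 : m = 0
      · subst hm0
        simp [hF0]
      · simp [coeff_one, hm0, hm, Nat.one_le_iff_ne_zero, hc m hm (Nat.one_le_iff_ne_zero.2 hm0)]
    obtain ⟨E, hE⟩ := h1
    have hE0 : coeff l F = constantCoeff E := by
      have : F = map (Int.castRingHom ℚ) (1 + C (r:ℤ) * g) + X ^ l * E := by rw [← hE]; ring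
      rw [this, map_add, coeff_map, map_add, coeff_C_mul, hg, coeff_mk, coeff_X_pow_mul']
      have : l ≠ 0 := by omega
      simp [coeff_one, this]
    obtain ⟨k, hk⟩ := Polynomial.powAddExpansion (map (Int.castRingHom ℚ) (1 + C (r:ℤ) * g))
      (X ^ l * E) r
    obtain ⟨k', hk'⟩ := Polynomial.powAddExpansion (1 : ℤ⟦X⟧) (C (r:ℤ) * g) r
    have hFe : F = map (Int.castRingHom ℚ) (1 + C (r:ℤ) * g) + X ^ l * E := by rw [← hE]; ring
    rw [← hFe, hF] at hk
    have hk2 := congrArg (coeff l) hk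
    rw [← map_pow, hk'] at hk2
    have e1 : coeff l ((r:ℚ⟦X⟧) * map (Int.castRingHom ℚ) (1 + C (r:ℤ) * g) ^ (r - 1) * (X ^ l * E))
       = r * constantCoeff E := by
      rw [show (r:ℚ⟦X⟧) * map (Int.castRingHom ℚ) (1 + C (r:ℤ) * g) ^ (r - 1) * (X ^ l * E) =
        X ^ l * ((r:ℚ⟦X⟧) * map (Int.castRingHom ℚ) (1 + C (r:ℤ) * g) ^ (r - 1) * E) by ring,
        coeff_X_pow_mul']
      have hg0 : constantCoeff g = 0 := by
        rw [← coeff_zero_eq_constantCoeff_apply, hg, coeff_mk]; simp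
      have : constantCoeff (map (Int.castRingHom ℚ) (1 + C (r:ℤ) * g)) = 1 := by
        rw [← coeff_zero_eq_constantCoeff_apply, coeff_map, coeff_zero_eq_constantCoeff_apply]
        simp [hg0]
      rw [if_pos le_rfl, Nat.sub_self, coeff_zero_eq_constantCoeff_apply, map_mul, map_mul, map_pow,
        this]
      simp
    have e2 : coeff l (k * (X ^ l * E) ^ 2) = 0 := by
      rw [show k * (X ^ l * E) ^ 2 = X ^ (l + l) * (k * E ^ 2) by ring, coeff_X_pow_mul']
      rw [if_neg (by omega)]
    rw [map_add _ (_ + _) (k * _), map_add _ _ ((r:ℚ⟦X⟧) * _ * _), e1, e2, add_zero] at hk2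
    have e3 : coeff l ((map (Int.castRingHom ℚ)) (1 ^ r + (r:ℤ⟦X⟧) * 1 ^ (r - 1) * (C (r:ℤ) * g)
        + k' * (C (r:ℤ) * g) ^ 2)) = (r:ℚ)^2 * ((coeff l (g + k' * g^2) : ℤ) : ℚ) := by
      have : (1 ^ r + (r:ℤ⟦X⟧) * 1 ^ (r - 1) * (C (r:ℤ) * g)
        + k' * (C (r:ℤ) * g) ^ 2) = 1 + C ((r:ℤ)^2) * (g + k' * g^2) := by
        simp only [map_pow, map_natCast]; ring
      rw [this, coeff_map, map_add, coeff_C_mul, coeff_one, if_neg (by omega)]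
      simp
    rw [e3] at hk2
    have e4 : coeff l (1 + C ((r:ℚ)^2) * X) = (r:ℚ)^2 * (if l = 1 then 1 else 0) := by
      rw [map_add, coeff_C_mul, coeff_X, coeff_one, if_neg (by omega : ¬ l = 0)]; simp
    rw [e4] at hk2
    refine ⟨(if l = 1 then 1 else 0) - coeff l (g + k' * g^2), ?_⟩
    rw [hE0]
    apply mul_left_cancel₀ hr'
    push_cast
    linear_combination -hk2
  choose! c hc using key
  refine ⟨mk fun l => if l = 0 then 1 else r * c l, ?_, ?_⟩
  · apply map_injective (Int.castRingHom ℚ) Int.cast_injective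
    have : map (Int.castRingHom ℚ) (mk fun l => if l = 0 then 1 else r * c l) = F := by
      ext l
      rw [coeff_map, coeff_mk]
      by_cases h : l = 0
      · subst h; simp [hF0]
      · simp [h, hc l (by omega)]
    rw [map_pow, this, hF]
    simp
  · rw [← coeff_zero_eq_constantCoeff_apply, coeff_mk]; simp

lemma root_coeff_bound (r : ℕ) (hr : r ≠ 0) (f : ℤ⟦X⟧) (hf : f ^ r = 1 + C ((r:ℤ)^2) * X)
    (hf0 : constantCoeff f = 1) (l : ℕ) : |coeff l f| ≤ ((r:ℤ)^2) ^ l := by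
  have hode : (1 + C ((r:ℤ)^2) * X) * d⁄dX ℤ f = C (r:ℤ) * f := by
    have h1 := congrArg (d⁄dX ℤ) hf
    rw [derivative_pow] at h1
    have hr' : (C (r:ℤ) : ℤ⟦X⟧) ≠ 0 := by
      rw [Ne, map_eq_zero_iff _ (C_injective)]; exact_mod_cast hr
    apply mul_left_cancel₀ hr'
    have h2 : (d⁄dX ℤ) (1 + C ((r:ℤ)^2) * X) = C ((r:ℤ)^2) := by
      ext n
      rw [coeff_derivative, map_add, coeff_C_mul, coeff_X, coeff_one, coeff_C]
      by_cases hn : n = 0 <;> simp [hn]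
    rw [h2] at h1
    rw [← hf]
    obtain ⟨q, rfl⟩ := Nat.exists_eq_succ_of_ne_zero hr
    simp only [Nat.succ_eq_add_one, Nat.add_sub_cancel] at h1 ⊢
    have h3 : (C ((q+1:ℕ):ℤ) : ℤ⟦X⟧) = ((q+1:ℕ) : ℤ⟦X⟧) := by simp
    have h4 : (C (((q+1:ℕ):ℤ)^2) : ℤ⟦X⟧) = ((q+1:ℕ) : ℤ⟦X⟧)^2 := by simp
    rw [h4] at h1
    rw [h3]
    linear_combination f * h1
  have hr1 : (1:ℤ) ≤ r := by exact_mod_cast Nat.one_le_iff_ne_zero.2 hr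
  induction l with
  | zero => simp [hf0]
  | succ l ih =>
    have h := congrArg (coeff l) hode
    rw [add_mul, one_mul, map_add, coeff_C_mul, mul_assoc, coeff_C_mul] at h
    have h5 : coeff l (X * d⁄dX ℤ f) = l * coeff l f := by
      cases l with
      | zero => simp
      | succ l => rw [coeff_succ_X_mul, coeff_derivative]; push_cast; ring
    rw [h5, coeff_derivative] at h
    have h6 : ((l:ℤ) + 1) * coeff (l+1) f = (r - r^2 * l) * coeff l f := by linear_combination h
    have h7 : ((l:ℤ) + 1) * |coeff (l+1) f| ≤ ((l:ℤ)+1) * ((r:ℤ)^2) ^ (l+1) := by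
      have : ((l:ℤ) + 1) * |coeff (l+1) f| = |((l:ℤ) + 1) * coeff (l+1) f| := by
        rw [abs_mul, abs_of_nonneg (by positivity : (0:ℤ) ≤ (l:ℤ)+1)]
      rw [this, h6, abs_mul]
      have h8 : |(r:ℤ) - r^2 * l| ≤ ((l:ℤ)+1) * (r:ℤ)^2 := by
        have hrr : (r:ℤ) ≤ r^2 := by nlinarith
        have hll : (0:ℤ) ≤ (r:ℤ)^2 * l := by positivity
        rw [abs_le]; constructor <;> nlinarith
      calc _ ≤ (((l:ℤ)+1) * (r:ℤ)^2) * ((r:ℤ)^2) ^ l := by gcongr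
        _ = _ := by ring
    exact le_of_mul_le_mul_left h7 (by positivity)

/-- a fixed integral `r`-th root of `1 + r^2 X`. -/
noncomputable def rt (r : ℕ) : ℤ⟦X⟧ :=
  if hr : r ≠ 0 then (exists_int_root r hr).choose else 1

lemma rt_pow (r : ℕ) (hr : r ≠ 0) : rt r ^ r = 1 + C ((r:ℤ)^2) * X := by
  rw [rt, dif_pos hr]; exact (exists_int_root r hr).choose_spec.1

lemma rt_const (r : ℕ) (hr : r ≠ 0) : constantCoeff (rt r) = 1 := by
  rw [rt, dif_pos hr]; exact (exists_int_root r hr).choose_spec.2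

/-- `∏ (1 + r^2 j X)^{1/r}` -/
noncomputable def th (r h : ℕ) : ℤ⟦X⟧ := ∏ j ∈ Finset.range h, rescale ((j:ℤ) + 1) (rt r)

/-- linear factor -/
noncomputable def lin (r j : ℕ) : Polynomial ℤ :=
  1 + Polynomial.C ((r:ℤ)^2 * ((j:ℤ) + 1)) * Polynomial.X

noncomputable def w (r h : ℕ) : Polynomial ℤ := ∏ j ∈ Finset.range h, lin r j

noncomputable def rho (r H h : ℕ) : Polynomial ℤ :=
  ∑ j ∈ Finset.range h, Polynomial.C ((r:ℤ) * ((j:ℤ) + 1)) *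
    ∏ i ∈ (Finset.range H).erase j, lin r i

lemma coe_prod {ι : Type*} (S : Finset ι) (f : ι → Polynomial ℤ) :
    ((∏ j ∈ S, f j : Polynomial ℤ) : ℤ⟦X⟧) = ∏ j ∈ S, (f j : ℤ⟦X⟧) := by
  classical
  induction S using Finset.induction_on with
  | empty => simp
  | insert a S ha ih => rw [Finset.prod_insert ha, Finset.prod_insert ha, Polynomial.coe_mul, ih]

lemma coe_sum {ι : Type*} (S : Finset ι) (f : ι → Polynomial ℤ) :
    ((∑ j ∈ S, f j : Polynomial ℤ) : ℤ⟦X⟧) = ∑ j ∈ S, (f j : ℤ⟦X⟧) := by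
  classical
  induction S using Finset.induction_on with
  | empty => simp
  | insert a S ha ih => rw [Finset.sum_insert ha, Finset.sum_insert ha, Polynomial.coe_add, ih]

lemma th_pow (r h : ℕ) (hr : r ≠ 0) : th r h ^ r = (w r h : ℤ⟦X⟧) := by
  rw [th, w, ← Finset.prod_pow]
  have : ((∏ j ∈ Finset.range h, lin r j : Polynomial ℤ) : ℤ⟦X⟧) =
    ∏ j ∈ Finset.range h, (lin r j : ℤ⟦X⟧) := coe_prod _ _
  rw [this]
  refine Finset.prod_congr rfl fun j _ => ?_
  rw [← map_pow, rt_pow r hr, lin]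
  ext n
  rw [coeff_rescale]
  simp only [map_add, coeff_C_mul, coeff_X, coeff_one, Polynomial.coeff_coe,
    Polynomial.coeff_add, Polynomial.coeff_C_mul, Polynomial.coeff_X, Polynomial.coeff_one]
  by_cases h0 : n = 0
  · subst h0; simp
  · by_cases h1 : n = 1
    · subst h1; simp; ring
    · have : ¬ 1 = n := fun h => h1 h.symm
      simp [h0, h1, this]

lemma lin_ne (r j : ℕ) : lin r j ≠ 0 := by
  intro h
  have := congrArg (Polynomial.coeff · 0) h
  simp [lin] at this

lemma w_ne (r h : ℕ) : w r h ≠ 0 := Finset.prod_ne_zero_iff.2 fun j _ => lin_ne r j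

lemma rho_eq (r H h : ℕ) (hh : h ≤ H) :
    Polynomial.C (r:ℤ) * rho r H h * w r h = w r H * Polynomial.derivative (w r h) := by
  rw [rho, w, w, Polynomial.derivative_prod_finset, Finset.mul_sum, Finset.sum_mul, Finset.mul_sum]
  refine Finset.sum_congr rfl fun j hj => ?_
  have hjH : j ∈ Finset.range H := Finset.range_mono hh hj
  rw [← Finset.mul_prod_erase _ _ hj, ← Finset.mul_prod_erase _ _ hjH]
  have : Polynomial.derivative (lin r j) = Polynomial.C ((r:ℤ)^2 * ((j:ℤ) + 1)) := by
    simp [lin]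
  rw [this]
  simp only [map_mul, map_pow]
  ring

lemma th_ode (r H h : ℕ) (hr : r ≠ 0) (hh : h ≤ H) :
    (w r H : ℤ⟦X⟧) * d⁄dX ℤ (th r h) = (rho r H h : ℤ⟦X⟧) * th r h := by
  have h1 := congrArg (d⁄dX ℤ) (th_pow r h hr)
  rw [derivative_pow, derivative_coe] at h1
  have h2 := congrArg (fun p : Polynomial ℤ => (p : ℤ⟦X⟧)) (rho_eq r H h hh)
  simp only [Polynomial.coe_mul, Polynomial.coe_C] at h2
  have hne : (C (r:ℤ) : ℤ⟦X⟧) * (w r h : ℤ⟦X⟧) ≠ 0 := by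
    refine mul_ne_zero ?_ ?_
    · rw [Ne, map_eq_zero_iff _ (C_injective)]; exact_mod_cast hr
    · rw [Ne, Polynomial.coe_eq_zero_iff]; exact w_ne r h
  apply mul_left_cancel₀ hne
  have h3 : (w r h : ℤ⟦X⟧) = th r h * th r h ^ (r - 1) := by
    rw [← th_pow r h hr, mul_pow_sub_one hr]
  have h4 : (C (r:ℤ) : ℤ⟦X⟧) = (r : ℤ⟦X⟧) := by simp
  calc _ = (w r H : ℤ⟦X⟧) * th r h * ((r:ℤ⟦X⟧) * th r h ^ (r-1) * d⁄dX ℤ (th r h)) := by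
        rw [h3, h4]; ring
    _ = ((w r H : ℤ⟦X⟧) * (Polynomial.derivative (w r h) : Polynomial ℤ)) * th r h := by rw [h1]; ring
    _ = _ := by rw [← h2]; ring

end PFS


namespace PFS
open Polynomial

/-- algebraic independence of the characters -/
lemma no_rel (r : ℕ) (hr : 2 ≤ r) (p q1 : ℝ[X]) (hp : Irreducible p) (hp' : p.natDegree = 1)
    (hq : ¬ p ∣ q1)
    (l m : ℝ[X]) (hl : l ≠ 0) (hm : m ≠ 0) (n : ℤ) (hn : n = 1 ∨ n = -1)
    (h : C (r:ℝ) * (p * q1) * (l * derivative m - derivative l * m)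
      = C (n:ℝ) * derivative (p * q1) * (l * m)) : False := by
  obtain ⟨a, l1, hl1, rfl⟩ := (FiniteMultiplicity.of_not_isUnit hp.not_isUnit hl).exists_eq_pow_mul_and_not_dvd.imp
    (fun a => id) |> fun ⟨l1, h1, h2⟩ => (⟨_, l1, h2, h1⟩ : ∃ a l1, ¬ p ∣ l1 ∧ l = p ^ a * l1)
  obtain ⟨b, m1, hm1, rfl⟩ := (FiniteMultiplicity.of_not_isUnit hp.not_isUnit hm).exists_eq_pow_mul_and_not_dvd.imp
    (fun a => id) |> fun ⟨l1, h1, h2⟩ => (⟨_, l1, h2, h1⟩ : ∃ a l1, ¬ p ∣ l1 ∧ m = p ^ a * l1)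
  have hpr : Prime p := hp.prime
  have e : ∀ (a : ℕ) (f : ℝ[X]), p * derivative (p ^ a * f) =
      p ^ a * (C (a:ℝ) * derivative p * f + p * derivative f) := by
    intro a f
    cases a with
    | zero => simp
    | succ a => rw [derivative_mul, derivative_pow_succ]; simp; ring
  have h1 : p ^ (a + b) * (C (r:ℝ) * q1 * (l1 * (C (b:ℝ) * derivative p * m1 + p * derivative m1)
      - (C (a:ℝ) * derivative p * l1 + p * derivative l1) * m1)) =
      p ^ (a + b) * (C (n:ℝ) * derivative (p * q1) * (l1 * m1)) := by
    have e1 := e a l1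
    have e2 := e b m1
    rw [pow_add]
    linear_combination h - C (r:ℝ) * q1 * p ^ a * l1 * e2 + C (r:ℝ) * q1 * p ^ b * m1 * e1
  have h2 := mul_left_cancel₀ (pow_ne_zero _ hp.ne_zero) h1
  rw [derivative_mul] at h2
  have h3 : p ∣ C ((r:ℝ) * (b - a) - n) * (derivative p * q1 * l1 * m1) := by
    refine ⟨C (n:ℝ) * derivative q1 * l1 * m1 - C (r:ℝ) * q1 * (l1 * derivative m1 -
      derivative l1 * m1), ?_⟩
    simp only [map_sub, map_mul]
    linear_combination h2
  have hd : derivative p ≠ 0 := by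
    intro h
    rw [derivative_eq_zero] at h
    omega
  have hdp : ¬ p ∣ derivative p := by
    intro h
    have := natDegree_le_of_dvd h hd
    have := natDegree_derivative_lt (p := p) (by omega)
    omega
  rcases hpr.dvd_or_dvd h3 with h | h
  · have hc : (r:ℝ) * (b - a) - n ≠ 0 := by
      intro h0
      have h0' : (r:ℤ) * (b - a) = n := by
        have : ((r:ℤ) * (b - a) : ℝ) = (n:ℝ) := by push_cast; linarith
        exact_mod_cast this
      have : (r:ℤ) ∣ 1 := by
        rcases hn with h | h
        · exact ⟨b - a, by rw [h0', h]⟩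
        · exact ⟨-(b - a), by rw [mul_neg, h0', h]; rfl⟩
      have := Int.le_of_dvd one_pos this
      omega
    exact hp.not_isUnit (isUnit_of_dvd_unit h (isUnit_C.2 hc.isUnit))
  · rcases hpr.dvd_or_dvd h with h | h
    · rcases hpr.dvd_or_dvd h with h | h
      · rcases hpr.dvd_or_dvd h with h | h
        · exact hdp h
        · exact hq h
      · exact hl1 h
    · exact hm1 h

noncomputable abbrev toR (p : ℤ[X]) : ℝ[X] := p.map (Int.castRingHom ℝ)

lemma toR_lin (r j : ℕ) : toR (lin r j) = 1 + C ((r:ℝ)^2 * (j + 1)) * X := by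
  simp [toR, lin]

lemma toR_lin_natDegree (r j : ℕ) (hr : r ≠ 0) : (toR (lin r j)).natDegree = 1 := by
  rw [toR_lin, add_comm, ← C_1]
  refine natDegree_linear ?_
  positivity

lemma toR_w_ne (r h : ℕ) : toR (w r h) ≠ 0 := by
  rw [Ne, Polynomial.map_eq_zero_iff Int.cast_injective]; exact w_ne r h

lemma hrel_aux (r H h h' : ℕ) (hr : 2 ≤ r) (hh : h < h') (hH : h' ≤ H) (n : ℤ) (hn : n = 1 ∨ n = -1)
    (l m : ℝ[X]) (hl : l ≠ 0) (hm : m ≠ 0)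
    (heq : toR (w r H) * (l * derivative m - derivative l * m) =
      C (n:ℝ) * (toR (rho r H h') - toR (rho r H h)) * (l * m)) : False := by
  obtain ⟨g, rfl⟩ : ∃ g, h' = g + 1 := ⟨h' - 1, by omega⟩
  set p := toR (lin r g)
  set q1 : ℝ[X] := ∏ j ∈ Finset.Ico h g, toR (lin r j)
  have hpd : p.natDegree = 1 := toR_lin_natDegree r g (by omega)
  have hp : Irreducible p := irreducible_of_degree_eq_one (degree_eq_iff_natDegree_eq_of_pos one_pos |>.2 hpd)
  have hr0 : (r:ℝ) ≠ 0 := by positivity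
  have hroot : p.eval (-1 / ((r:ℝ)^2 * (g+1))) = 0 := by
    simp only [p, toR_lin]; simp; field_simp; norm_num
  have hq1 : ¬ p ∣ q1 := by
    rintro ⟨c, hc⟩
    have := congrArg (eval (-1 / ((r:ℝ)^2 * (g+1)))) hc
    rw [eval_mul, hroot, zero_mul, eval_prod, Finset.prod_eq_zero_iff] at this
    obtain ⟨j, hj, h0⟩ := this
    rw [Finset.mem_Ico] at hj
    rw [toR_lin] at h0
    simp at h0
    have hjg : (j:ℝ) + 1 < g + 1 := by
      have : (j:ℝ) < g := by exact_mod_cast hj.2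
      linarith
    have : (1:ℝ) = (j + 1) / (g + 1) := by
      field_simp at h0 ⊢
      linarith
    rw [eq_div_iff (by positivity)] at this
    linarith
  have hw : toR (w r (g+1)) = toR (w r h) * (p * q1) := by
    have : w r (g + 1) = w r h * (lin r g * ∏ j ∈ Finset.Ico h g, lin r j) := by
      rw [w, Finset.prod_range_succ, w, ← Finset.prod_range_mul_prod_Ico _ (by omega : h ≤ g)]
      ring
    rw [toR, this]
    simp [p, q1, Polynomial.map_prod]
  have e1 := congrArg toR (rho_eq r H (g+1) hH)
  have e2 := congrArg toR (rho_eq r H h (by omega))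
  simp only [toR, Polynomial.map_mul, ← Polynomial.derivative_map, Polynomial.map_C] at e1 e2 hw
  rw [hw, derivative_mul] at e1
  have hwH := toR_w_ne r H
  have hwh := toR_w_ne r h
  simp only [toR] at hwH hwh heq
  refine no_rel r hr p q1 hp hpd hq1 l m hl hm n hn ?_
  apply mul_left_cancel₀ (mul_ne_zero hwH hwh)
  simp only [eq_intCast, Int.cast_natCast] at e1 e2
  linear_combination C (r:ℝ) * map (Int.castRingHom ℝ) (w r h) * (p * q1) * heq
    + C (n:ℝ) * (l * m) * e1 - C (n:ℝ) * (l * m) * p * q1 * e2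

lemma hrel (r H : ℕ) (hr : 2 ≤ r) {ι : Type*} (hs : ι → ℕ) (hinj : Function.Injective hs)
    (hH : ∀ i, hs i ≤ H) : ∀ i j, i ≠ j → ∀ l m : ℝ[X], l ≠ 0 → m ≠ 0 →
      toR (w r H) * (l * derivative m - derivative l * m)
        ≠ (toR (rho r H (hs j)) - toR (rho r H (hs i))) * (l * m) := by
  intro i j hij l m hl hm heq
  rcases lt_trichotomy (hs i) (hs j) with h | h | h
  · exact hrel_aux r H _ _ hr h (hH j) 1 (Or.inl rfl) l m hl hm (by rw [heq]; simp)
  · exact hij (hinj h)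
  · exact hrel_aux r H _ _ hr h (hH i) (-1) (Or.inr rfl) l m hl hm (by rw [heq]; simp)

end PFS


namespace PFS
open PowerSeries

def Maj (f : ℤ⟦X⟧) (g : ℝ⟦X⟧) : Prop := ∀ n, |((coeff n f : ℤ) : ℝ)| ≤ coeff n g

lemma Maj.nonneg {f : ℤ⟦X⟧} {g : ℝ⟦X⟧} (h : Maj f g) (n : ℕ) : 0 ≤ coeff n g :=
  (abs_nonneg _).trans (h n)

lemma Maj.mono {f : ℤ⟦X⟧} {g g' : ℝ⟦X⟧} (h : Maj f g) (hg : ∀ n, coeff n g ≤ coeff n g') :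
    Maj f g' := fun n => (h n).trans (hg n)

lemma Maj.add {f f' : ℤ⟦X⟧} {g g' : ℝ⟦X⟧} (h : Maj f g) (h' : Maj f' g') :
    Maj (f + f') (g + g') := by
  intro n
  rw [map_add, map_add, Int.cast_add]
  exact (abs_add_le _ _).trans (add_le_add (h n) (h' n))

lemma Maj.sum {ι : Type*} (S : Finset ι) (f : ι → ℤ⟦X⟧) (g : ℝ⟦X⟧) (h : ∀ i ∈ S, Maj (f i) g) :
    Maj (∑ i ∈ S, f i) (C (S.card : ℝ) * g) := by
  intro n
  rw [map_sum, coeff_C_mul, Int.cast_sum]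
  refine (Finset.abs_sum_le_sum_abs _ _).trans ?_
  refine (Finset.sum_le_card_nsmul _ _ _ fun i hi => h i hi n).trans ?_
  simp

lemma Maj.mul {f f' : ℤ⟦X⟧} {g g' : ℝ⟦X⟧} (h : Maj f g) (h' : Maj f' g') :
    Maj (f * f') (g * g') := by
  intro n
  rw [coeff_mul, coeff_mul, Int.cast_sum]
  refine (Finset.abs_sum_le_sum_abs _ _).trans (Finset.sum_le_sum fun i _ => ?_)
  rw [Int.cast_mul, abs_mul]
  exact mul_le_mul (h _) (h' _) (abs_nonneg _) (h.nonneg _)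

lemma Maj.derivative {f : ℤ⟦X⟧} {g : ℝ⟦X⟧} (h : Maj f g) : Maj (d⁄dX ℤ f) (d⁄dX ℝ g) := by
  intro n
  rw [coeff_derivative, coeff_derivative]
  push_cast
  rw [abs_mul, abs_of_nonneg (by positivity : (0:ℝ) ≤ (n:ℝ) + 1)]
  exact mul_le_mul_of_nonneg_right (h _) (by positivity)

noncomputable def G (R : ℝ) : ℝ⟦X⟧ := mk fun n => R ^ n

lemma G_mul (R : ℝ) : G R * (1 - C R * X) = 1 := by
  ext n
  cases n with
  | zero => simp [G]
  | succ n =>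
    rw [mul_sub, mul_one, map_sub, ← mul_assoc, coeff_succ_mul_X, mul_comm, coeff_C_mul, G,
      coeff_mk, coeff_mk, coeff_one]
    simp [pow_succ]; ring

lemma G_derivative (R : ℝ) : d⁄dX ℝ (G R) = C R * G R ^ 2 := by
  have h := congrArg (d⁄dX ℝ) (G_mul R)
  have h1 : d⁄dX ℝ (1 - C R * X) = - C R := by
    ext n
    rw [coeff_derivative, map_sub, coeff_C_mul, coeff_X, coeff_one, map_neg, coeff_C]
    by_cases hn : n = 0 <;> simp [hn]
  rw [Derivation.leibniz, h1, derivative_one] at h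
  simp only [smul_eq_mul] at h
  have h2 := G_mul R
  linear_combination G R * h - (d⁄dX ℝ (G R)) * h2

lemma G_pow_derivative (R : ℝ) (p : ℕ) : d⁄dX ℝ (G R ^ p) = C (p * R) * G R ^ (p + 1) := by
  cases p with
  | zero => simp
  | succ p =>
    rw [derivative_pow, G_derivative]
    simp
    ring

lemma G_pow_nonneg {R : ℝ} (hR : 0 ≤ R) (p n : ℕ) : 0 ≤ coeff n (G R ^ p) := by
  induction p generalizing n with
  | zero => rw [pow_zero, coeff_one]; split_ifs <;> norm_num
  | succ p ih =>
    rw [pow_succ, coeff_mul]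
    refine Finset.sum_nonneg fun i _ => mul_nonneg (ih _) ?_
    rw [G, coeff_mk]; positivity

lemma G_pow_le_succ {R : ℝ} (hR : 0 ≤ R) (p n : ℕ) :
    coeff n (G R ^ p) ≤ coeff n (G R ^ (p + 1)) := by
  rw [pow_succ, coeff_mul]
  have : coeff n (G R ^ p) = coeff n (G R ^ p) * coeff 0 (G R) := by simp [G]
  rw [this]
  refine Finset.single_le_sum (f := fun i : ℕ × ℕ => coeff i.1 (G R ^ p) * coeff i.2 (G R))
    (fun i _ => mul_nonneg (G_pow_nonneg hR _ _) ?_) (a := (n, 0)) (by simp)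
  rw [G, coeff_mk]; positivity

lemma G_pow_le {R : ℝ} (hR : 0 ≤ R) {p q : ℕ} (hpq : p ≤ q) (n : ℕ) :
    coeff n (G R ^ p) ≤ coeff n (G R ^ q) := by
  induction q, hpq using Nat.le_induction with
  | base => rfl
  | succ q _ ih => exact ih.trans (G_pow_le_succ hR _ _)

lemma Maj.up {R : ℝ} (hR : 0 ≤ R) {f : ℤ⟦X⟧} {c c' : ℝ} {p q : ℕ} (h : Maj f (C c * G R ^ p))
    (hc : 0 ≤ c) (hcc : c ≤ c') (hpq : p ≤ q) : Maj f (C c' * G R ^ q) := by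
  refine h.mono fun n => ?_
  rw [coeff_C_mul, coeff_C_mul]
  exact mul_le_mul hcc (G_pow_le hR hpq n) (G_pow_nonneg hR _ _) (hc.trans hcc)

lemma Maj.prod {ι : Type*} (S : Finset ι) (f : ι → ℤ⟦X⟧) (g : ℝ⟦X⟧) (h : ∀ i ∈ S, Maj (f i) g) :
    Maj (∏ i ∈ S, f i) (g ^ S.card) := by
  classical
  induction S using Finset.induction_on with
  | empty => intro n; simp [coeff_one]; split_ifs <;> simp
  | insert a S ha ih =>
    rw [Finset.prod_insert ha, Finset.card_insert_of_notMem ha, pow_succ']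
    exact (h a (Finset.mem_insert_self _ _)).mul (ih fun i hi => h i (Finset.mem_insert_of_mem hi))

lemma maj_rt (r j : ℕ) (hr : r ≠ 0) (R : ℝ) (hR : (r:ℝ)^2 * (j + 1) ≤ R) :
    Maj (rescale ((j:ℤ) + 1) (rt r)) (G R) := by
  intro n
  rw [coeff_rescale, G, coeff_mk]
  have h := root_coeff_bound r hr (rt r) (rt_pow r hr) (rt_const r hr) n
  have h' : |((coeff n (rt r) : ℤ) : ℝ)| ≤ ((r:ℝ)^2)^n := by exact_mod_cast h
  push_cast
  rw [abs_mul, abs_of_nonneg (by positivity : (0:ℝ) ≤ ((j:ℝ)+1)^n)]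
  calc _ ≤ ((j:ℝ)+1)^n * ((r:ℝ)^2)^n := by gcongr
    _ = ((r:ℝ)^2 * (j + 1))^n := by rw [mul_pow]; ring
    _ ≤ R ^ n := by gcongr

lemma maj_lin (r j : ℕ) (R : ℝ) (hR : (r:ℝ)^2 * (j + 1) ≤ R) :
    Maj (lin r j : ℤ⟦X⟧) (G R) := by
  intro n
  have hR0 : 0 ≤ R := le_trans (by positivity) hR
  rw [G, coeff_mk, Polynomial.coeff_coe, lin, Polynomial.coeff_add, Polynomial.coeff_C_mul,
    Polynomial.coeff_X, Polynomial.coeff_one]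
  by_cases h0 : n = 0
  · subst h0; simp
  by_cases h1 : n = 1
  · subst h1
    simp
    rw [abs_of_nonneg (by positivity : (0:ℝ) ≤ (j:ℝ)+1)]
    exact hR
  · have : ¬ 1 = n := fun h => h1 h.symm
    simp [h0, this]
    positivity

section
variable (r H : ℕ)

lemma hR_of {r H j : ℕ} (hj : j < H) : (r:ℝ)^2 * (j + 1) ≤ (r:ℝ)^2 * H := by
  have : (j:ℝ) + 1 ≤ H := by exact_mod_cast hj
  gcongr

lemma maj_th (h : ℕ) (hr : r ≠ 0) (hh : h ≤ H) : Maj (th r h) (C 1 * G ((r:ℝ)^2 * H) ^ H) := by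
  have := Maj.prod (Finset.range h) (fun j => rescale ((j:ℤ) + 1) (rt r)) (G ((r:ℝ)^2 * H))
    (fun j hj => maj_rt r j hr _ (hR_of (by rw [Finset.mem_range] at hj; omega)))
  rw [Finset.card_range] at this
  refine Maj.up (by positivity) (c := 1) (p := h) ?_ zero_le_one le_rfl hh
  simpa [th] using this

lemma maj_w : Maj (w r H : ℤ⟦X⟧) (C 1 * G ((r:ℝ)^2 * H) ^ H) := by
  have := Maj.prod (Finset.range H) (fun j => (lin r j : ℤ⟦X⟧)) (G ((r:ℝ)^2 * H))
    (fun j hj => maj_lin r j _ (hR_of (by rw [Finset.mem_range] at hj; omega)))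
  rw [Finset.card_range] at this
  rw [w, coe_prod]
  simpa using this

lemma maj_rho (h : ℕ) (hr : r ≠ 0) (hh : h ≤ H) :
    Maj (rho r H h : ℤ⟦X⟧) (C ((r:ℝ)^2 * H * H) * G ((r:ℝ)^2 * H) ^ H) := by
  have hR0 : (0:ℝ) ≤ (r:ℝ)^2 * H := by positivity
  have h1 : ∀ j ∈ Finset.range h, Maj ((Polynomial.C ((r:ℤ) * ((j:ℤ) + 1)) *
    ∏ i ∈ (Finset.range H).erase j, lin r i : Polynomial ℤ) : ℤ⟦X⟧)
      (C ((r:ℝ)^2 * H) * G ((r:ℝ)^2 * H) ^ H) := by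
    intro j hj
    rw [Finset.mem_range] at hj
    have := Maj.prod ((Finset.range H).erase j) (fun j => (lin r j : ℤ⟦X⟧)) (G ((r:ℝ)^2 * H))
      (fun j hj => maj_lin r j _ (hR_of (by
        have := Finset.mem_of_mem_erase hj
        rwa [Finset.mem_range] at this)))
    rw [← coe_prod] at this
    have h2 : ((Polynomial.C ((r:ℤ) * ((j:ℤ) + 1)) *
      ∏ i ∈ (Finset.range H).erase j, lin r i : Polynomial ℤ) : ℤ⟦X⟧) =
      C ((r:ℤ) * ((j:ℤ) + 1)) * ((∏ i ∈ (Finset.range H).erase j, lin r i : Polynomial ℤ) : ℤ⟦X⟧) := by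
      rw [Polynomial.coe_mul, Polynomial.coe_C]
    rw [h2]
    intro n
    rw [coeff_C_mul, coeff_C_mul, Int.cast_mul, abs_mul]
    refine mul_le_mul ?_ ((this n).trans (G_pow_le hR0 ?_ n)) (abs_nonneg _) hR0
    · push_cast
      rw [abs_of_nonneg (by positivity)]
      have : (j:ℝ) + 1 ≤ H := by exact_mod_cast (by omega : j + 1 ≤ H)
      have hr1 : (1:ℝ) ≤ r := by exact_mod_cast Nat.one_le_iff_ne_zero.2 hr
      have : (r:ℝ) ≤ (r:ℝ)^2 := by nlinarith
      gcongr
    · refine (Finset.card_le_card (Finset.erase_subset _ _)).trans (by simp)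
  have h2 := Maj.sum _ _ _ h1
  rw [Finset.card_range, ← mul_assoc, ← map_mul] at h2
  rw [rho, coe_sum]
  refine Maj.up hR0 h2 (by positivity) ?_ le_rfl
  have : (h:ℝ) ≤ H := by exact_mod_cast hh
  nlinarith [mul_le_mul_of_nonneg_right this hR0]

lemma maj_poly (A : Polynomial ℤ) (a R : ℝ) (hA : ∀ n, |((A.coeff n : ℤ) : ℝ)| ≤ a) (hR : 1 ≤ R) :
    Maj (A : ℤ⟦X⟧) (C a * G R ^ 1) := by
  intro n
  have ha : 0 ≤ a := (abs_nonneg _).trans (hA 0)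
  rw [Polynomial.coeff_coe, coeff_C_mul, pow_one, G, coeff_mk]
  exact (hA n).trans (le_mul_of_one_le_right ha (one_le_pow₀ hR))

/-- constants in the bounds -/
noncomputable def cst (k : ℕ) : ℝ := ((r:ℝ)^2 * H) ^ k * ((H:ℝ) + 1) ^ k * (k.factorial : ℝ)

lemma maj_stp (h : ℕ) (hr : r ≠ 0) (hh : h ≤ H) (hH : 1 ≤ H) (A : Polynomial ℤ) (a : ℝ)
    (hA : ∀ n, |((A.coeff n : ℤ) : ℝ)| ≤ a) (k : ℕ) :
    Maj (stp (w r H) (rho r H h) k A : ℤ⟦X⟧)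
      (C (a * cst r H k) * G ((r:ℝ)^2 * H) ^ (1 + k * (H + 1))) := by
  have hr1 : (1:ℝ) ≤ r := by exact_mod_cast Nat.one_le_iff_ne_zero.2 hr
  have hH1 : (1:ℝ) ≤ H := by exact_mod_cast hH
  have hR1 : (1:ℝ) ≤ (r:ℝ)^2 * H := by nlinarith [one_le_pow₀ hr1 (n := 2)]
  have hR0 : (0:ℝ) ≤ (r:ℝ)^2 * H := by positivity
  have ha : 0 ≤ a := (abs_nonneg _).trans (hA 0)
  induction k with
  | zero => simpa [cst, stp] using maj_poly A a _ hA hR1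
  | succ k ih =>
    have hc : 0 ≤ cst r H k := by unfold cst; positivity
    have h1 := (maj_w r H).mul ih.derivative
    have h2 := ih.mul (maj_rho r H h hr hh)
    rw [derivative_coe] at h1
    have hder : d⁄dX ℝ (C (a * cst r H k) * G ((r:ℝ)^2 * H) ^ (1 + k * (H + 1))) =
      C (a * cst r H k) * (C (((1 + k * (H + 1) : ℕ) : ℝ) * ((r:ℝ)^2 * H)) *
        G ((r:ℝ)^2 * H) ^ (1 + k * (H + 1) + 1)) := by
      rw [← smul_eq_C_mul, Derivation.map_smul, G_pow_derivative, smul_eq_C_mul]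
    rw [hder] at h1
    have h1' : Maj ((w r H : ℤ⟦X⟧) * (Polynomial.derivative (stp (w r H) (rho r H h) k A) : Polynomial ℤ))
      (C (a * cst r H k * (((1 + k * (H + 1) : ℕ) : ℝ) * ((r:ℝ)^2 * H))) *
        G ((r:ℝ)^2 * H) ^ (1 + (k+1) * (H + 1))) := by
      convert h1 using 1
      rw [show 1 + (k+1) * (H + 1) = H + (1 + k * (H + 1) + 1) by ring]
      simp only [map_mul, map_one, one_mul, pow_add]; ring
    have h2' : Maj ((stp (w r H) (rho r H h) k A : ℤ⟦X⟧) * (rho r H h : ℤ⟦X⟧))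
      (C (a * cst r H k * ((r:ℝ)^2 * H * H)) *
        G ((r:ℝ)^2 * H) ^ (1 + (k+1) * (H + 1))) := by
      refine Maj.up hR0 (c := a * cst r H k * ((r:ℝ)^2 * H * H)) (p := 1 + k * (H+1) + H) ?_
        (by positivity) le_rfl (by ring_nf; omega)
      convert h2 using 1
      simp only [map_mul, pow_add]; ring
    have h3 := h1'.add h2'
    rw [← add_mul, ← map_add] at h3
    convert h3 using 1
    · simp only [stp, Polynomial.coe_add, Polynomial.coe_mul]
    · congr 2
      simp only [cst, Nat.factorial_succ]
      push_cast
      ring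
end

end PFS


namespace PFS
open PowerSeries

/-- absolutely convergent at `x` -/
def SR (x : ℝ) (g : ℝ⟦X⟧) : Prop := Summable fun n => ‖coeff n g * x ^ n‖

noncomputable def evR (x : ℝ) (g : ℝ⟦X⟧) : ℝ := ∑' n, coeff n g * x ^ n

lemma conv_eq (x : ℝ) (g g' : ℝ⟦X⟧) (n : ℕ) : coeff n (g * g') * x ^ n =
    ∑ kl ∈ Finset.HasAntidiagonal.antidiagonal n, (coeff kl.1 g * x ^ kl.1) * (coeff kl.2 g' * x ^ kl.2) := by
  rw [coeff_mul, Finset.sum_mul]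
  refine Finset.sum_congr rfl fun kl h => ?_
  rw [Finset.HasAntidiagonal.mem_antidiagonal] at h
  rw [← h, pow_add]; ring

lemma SR.mul {x : ℝ} {g g' : ℝ⟦X⟧} (h : SR x g) (h' : SR x g') : SR x (g * g') := by
  unfold SR
  simp_rw [conv_eq]
  exact summable_norm_sum_mul_antidiagonal_of_summable_norm
    (f := fun n => coeff n g * x ^ n) (g := fun n => coeff n g' * x ^ n) h h'

lemma evR_mul {x : ℝ} {g g' : ℝ⟦X⟧} (h : SR x g) (h' : SR x g') :
    evR x (g * g') = evR x g * evR x g' := by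
  unfold evR
  simp_rw [conv_eq]
  exact (tsum_mul_tsum_eq_tsum_sum_antidiagonal_of_summable_norm h h').symm

lemma SR.add {x : ℝ} {g g' : ℝ⟦X⟧} (h : SR x g) (h' : SR x g') : SR x (g + g') := by
  unfold SR
  refine Summable.of_nonneg_of_le (fun _ => norm_nonneg _) (fun n => ?_) (Summable.add h h')
  rw [map_add, add_mul]
  exact norm_add_le _ _

lemma evR_add {x : ℝ} {g g' : ℝ⟦X⟧} (h : SR x g) (h' : SR x g') :
    evR x (g + g') = evR x g + evR x g' := by
  unfold evR
  simp_rw [map_add, add_mul]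
  exact (Summable.tsum_add (Summable.of_norm h) (Summable.of_norm h'))

lemma SR_poly (x : ℝ) (p : Polynomial ℝ) : SR x (p : ℝ⟦X⟧) := by
  unfold SR
  refine summable_of_ne_finset_zero (s := Finset.range (p.natDegree + 1)) fun n hn => ?_
  rw [Finset.mem_range, not_lt] at hn
  rw [Polynomial.coeff_coe, Polynomial.coeff_eq_zero_of_natDegree_lt (by omega)]
  simp

lemma evR_poly (x : ℝ) (p : Polynomial ℝ) : evR x (p : ℝ⟦X⟧) = p.eval x := by
  unfold evR
  rw [tsum_eq_sum (s := Finset.range (p.natDegree + 1)), Polynomial.eval_eq_sum_range]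
  · simp
  · intro n hn
    rw [Finset.mem_range, not_lt] at hn
    rw [Polynomial.coeff_coe, Polynomial.coeff_eq_zero_of_natDegree_lt (by omega)]
    simp

lemma SR_one (x : ℝ) : SR x 1 := by simpa using SR_poly x 1
lemma evR_one (x : ℝ) : evR x 1 = 1 := by simpa using evR_poly x 1
lemma SR_C (x c : ℝ) : SR x (C c) := by simpa using SR_poly x (Polynomial.C c)
lemma evR_C (x c : ℝ) : evR x (C c) = c := by simpa using evR_poly x (Polynomial.C c)

lemma SR.pow {x : ℝ} {g : ℝ⟦X⟧} (h : SR x g) (p : ℕ) : SR x (g ^ p) := by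
  induction p with
  | zero => simpa using SR_one x
  | succ p ih => rw [pow_succ]; exact ih.mul h

lemma evR_pow {x : ℝ} {g : ℝ⟦X⟧} (h : SR x g) (p : ℕ) : evR x (g ^ p) = evR x g ^ p := by
  induction p with
  | zero => simpa using evR_one x
  | succ p ih => rw [pow_succ, evR_mul (h.pow p) h, ih, pow_succ]

lemma SR.sum {x : ℝ} {ι : Type*} (S : Finset ι) (g : ι → ℝ⟦X⟧) (h : ∀ i ∈ S, SR x (g i)) :
    SR x (∑ i ∈ S, g i) ∧ evR x (∑ i ∈ S, g i) = ∑ i ∈ S, evR x (g i) := by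
  classical
  induction S using Finset.induction_on with
  | empty =>
    have h0 := SR_poly x 0
    have h1 := evR_poly x 0
    simp at h0 h1
    exact ⟨by simpa using h0, by simpa using h1⟩
  | insert a S ha ih =>
    rw [Finset.sum_insert ha, Finset.sum_insert ha]
    have := ih fun i hi => h i (Finset.mem_insert_of_mem hi)
    have h2 := h a (Finset.mem_insert_self _ _)
    exact ⟨h2.add this.1, by rw [evR_add h2 this.1, this.2]⟩

lemma SR.prod {x : ℝ} {ι : Type*} (S : Finset ι) (g : ι → ℝ⟦X⟧) (h : ∀ i ∈ S, SR x (g i)) :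
    SR x (∏ i ∈ S, g i) ∧ evR x (∏ i ∈ S, g i) = ∏ i ∈ S, evR x (g i) := by
  classical
  induction S using Finset.induction_on with
  | empty => simpa using ⟨SR_one x, evR_one x⟩
  | insert a S ha ih =>
    rw [Finset.prod_insert ha, Finset.prod_insert ha]
    have := ih fun i hi => h i (Finset.mem_insert_of_mem hi)
    have h2 := h a (Finset.mem_insert_self _ _)
    exact ⟨h2.mul this.1, by rw [evR_mul h2 this.1, this.2]⟩

lemma G_SR {R x : ℝ} (hR : 0 ≤ R) (hx : 0 ≤ x) (h : R * x < 1) : SR x (G R) := by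
  unfold SR
  have : ∀ n, ‖coeff n (G R) * x ^ n‖ = (R * x) ^ n := by
    intro n
    rw [G, coeff_mk, ← mul_pow, Real.norm_of_nonneg (by positivity)]
  simp_rw [this]
  exact summable_geometric_of_lt_one (by positivity) h

lemma G_ev {R x : ℝ} (hR : 0 ≤ R) (hx : 0 ≤ x) (h : R * x < 1) : evR x (G R) = (1 - R * x)⁻¹ := by
  unfold evR
  have : ∀ n, coeff n (G R) * x ^ n = (R * x) ^ n := by
    intro n
    rw [G, coeff_mk, ← mul_pow]
  simp_rw [this]
  exact tsum_geometric_of_lt_one (by positivity) h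

noncomputable abbrev toRS (f : ℤ⟦X⟧) : ℝ⟦X⟧ := PowerSeries.map (Int.castRingHom ℝ) f

lemma toRS_poly (p : Polynomial ℤ) : toRS (p : ℤ⟦X⟧) = ((toR p : Polynomial ℝ) : ℝ⟦X⟧) := by
  ext n; simp

/-- the value of a series at `x` -/
noncomputable def ev (x : ℝ) (f : ℤ⟦X⟧) : ℝ := evR x (toRS f)

lemma Maj.SR {x c R : ℝ} {p : ℕ} {f : ℤ⟦X⟧} (h : Maj f (C c * G R ^ p)) (hR : 0 ≤ R)
    (hx : 0 ≤ x) (hRx : R * x < 1) : SR x (toRS f) := by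
  have h1 : PFS.SR x (C c * G R ^ p) := (SR_C x c).mul ((G_SR hR hx hRx).pow p)
  refine Summable.of_nonneg_of_le (fun _ => norm_nonneg _) (fun n => ?_) h1
  rw [norm_mul, norm_mul]
  refine mul_le_mul_of_nonneg_right ?_ (norm_nonneg _)
  rw [Real.norm_of_nonneg (h.nonneg n), coeff_map]
  exact h n

lemma Maj.ev_le {x c R : ℝ} {p t : ℕ} {f : ℤ⟦X⟧} (h : Maj f (C c * G R ^ p)) (hR : 0 < R)
    (hx : 0 ≤ x) (hRx : 2 * R * x ≤ 1) (ht : X ^ t ∣ f) :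
    |ev x f| ≤ c * 2 ^ p * (2 * R * x) ^ t := by
  have hy : R * (1 / (2 * R)) < 1 := by field_simp; norm_num
  have hy0 : 0 ≤ 1 / (2 * R) := by positivity
  have h1 : PFS.SR (1 / (2 * R)) (C c * G R ^ p) := (SR_C _ c).mul ((G_SR hR.le hy0 hy).pow p)
  have h2 : evR (1 / (2 * R)) (C c * G R ^ p) = c * 2 ^ p := by
    rw [evR_mul (SR_C _ c) ((G_SR hR.le hy0 hy).pow p), evR_C, evR_pow (G_SR hR.le hy0 hy),
      G_ev hR.le hy0 hy]
    congr 2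
    field_simp
    norm_num
  have hS := h.SR hR.le hx (by nlinarith)
  have h3 : Summable fun n => coeff n (C c * G R ^ p) * (1 / (2 * R)) ^ n := Summable.of_norm h1
  have key : ∀ n, ‖coeff n (toRS f) * x ^ n‖ ≤
      coeff n (C c * G R ^ p) * (1 / (2 * R)) ^ n * (2 * R * x) ^ t := by
    intro n
    by_cases hn : n < t
    · have : coeff n f = 0 := X_pow_dvd_iff.1 ht n hn
      rw [coeff_map, this]
      simp only [map_zero, zero_mul, norm_zero]
      have := h.nonneg n
      positivity
    · rw [norm_mul, mul_assoc]
      refine mul_le_mul ?_ ?_ (norm_nonneg _) (h.nonneg n)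
      · rw [coeff_map]; exact h n
      · rw [Real.norm_of_nonneg (by positivity)]
        calc x ^ n = (1 / (2 * R)) ^ n * (2 * R * x) ^ n := by
              rw [← mul_pow]; congr 1; field_simp
          _ ≤ _ := by
              gcongr ?_ * ?_
              exact pow_le_pow_of_le_one (by positivity) hRx (not_lt.1 hn)
  unfold ev evR
  rw [← Real.norm_eq_abs]
  refine (norm_tsum_le_tsum_norm hS).trans ?_
  refine (Summable.tsum_le_tsum key hS (h3.mul_right _)).trans ?_
  rw [tsum_mul_right]
  unfold evR at h2
  rw [h2]

/-- coefficient bound -/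
lemma Maj.coeff_le {c R : ℝ} {p : ℕ} {f : ℤ⟦X⟧} (h : Maj f (C c * G R ^ p)) (hR : 0 < R) (n : ℕ) :
    |((coeff n f : ℤ) : ℝ)| ≤ c * 2 ^ p * (2 * R) ^ n := by
  have hy : R * (1 / (2 * R)) < 1 := by field_simp; norm_num
  have hy0 : 0 ≤ 1 / (2 * R) := by positivity
  have h1 : PFS.SR (1 / (2 * R)) (C c * G R ^ p) := (SR_C _ c).mul ((G_SR hR.le hy0 hy).pow p)
  have h2 : evR (1 / (2 * R)) (C c * G R ^ p) = c * 2 ^ p := by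
    rw [evR_mul (SR_C _ c) ((G_SR hR.le hy0 hy).pow p), evR_C, evR_pow (G_SR hR.le hy0 hy),
      G_ev hR.le hy0 hy]
    congr 2
    field_simp
    norm_num
  have h3 : Summable fun n => coeff n (C c * G R ^ p) * (1 / (2 * R)) ^ n := Summable.of_norm h1
  have h4 := h3.le_tsum n (fun j _ => mul_nonneg (h.nonneg j) (by positivity))
  unfold evR at h2
  rw [h2] at h4
  have h5 := (h n).trans (le_of_eq (by
    rw [mul_assoc, ← mul_pow, one_div, inv_mul_cancel₀ (by positivity), one_pow, mul_one] : coeff n (C c * G R ^ p) = coeff n (C c * G R ^ p) * (1 / (2 * R)) ^ n * (2 * R) ^ n))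
  refine h5.trans ?_
  gcongr

end PFS


namespace PFS
open PowerSeries

lemma ev_poly (x : ℝ) (p : Polynomial ℤ) : ev x (p : ℤ⟦X⟧) = (toR p).eval x := by
  rw [ev, toRS_poly, evR_poly]

lemma toR_w_eval (r h : ℕ) (x : ℝ) :
    (toR (w r h)).eval x = ∏ j ∈ Finset.range h, (1 + (r:ℝ)^2 * (j + 1) * x) := by
  rw [w, toR, Polynomial.map_prod, Polynomial.eval_prod]
  refine Finset.prod_congr rfl fun j _ => ?_
  have := toR_lin r j
  rw [toR] at this
  rw [this]; simp

lemma toR_w_eval_pos (r h : ℕ) {x : ℝ} (hx : 0 ≤ x) : 0 < (toR (w r h)).eval x := by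
  rw [toR_w_eval]
  exact Finset.prod_pos fun j _ => by positivity

lemma rescale_rt_SR (r H j : ℕ) (hr : r ≠ 0) (hj : j < H) {x : ℝ} (hx : 0 ≤ x)
    (hRx : (r:ℝ)^2 * H * x < 1) : SR x (toRS (rescale ((j:ℤ) + 1) (rt r))) := by
  have h := maj_rt r j hr _ (hR_of (r := r) hj)
  have h' : Maj (rescale ((j:ℤ) + 1) (rt r)) (C 1 * G ((r:ℝ)^2 * H) ^ 1) := by simpa using h
  exact h'.SR (by positivity) hx hRx

lemma rescale_rt_pos (r H j : ℕ) (hr : r ≠ 0) (hj : j < H) {x : ℝ} (hx : 0 ≤ x)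
    (hRx : 8 * ((r:ℝ)^2 * H * x) ≤ 1) : 0 < ev x (rescale ((j:ℤ) + 1) (rt r)) := by
  have h := maj_rt r j hr _ (hR_of (r := r) hj)
  have hH : (0:ℝ) < H := by exact_mod_cast (by omega : 0 < H)
  have hR : (0:ℝ) < (r:ℝ)^2 * H := by positivity
  set f := rescale ((j:ℤ) + 1) (rt r) with hf
  have h0 : coeff 0 (f - 1) = 0 := by
    rw [map_sub, hf, coeff_rescale, coeff_zero_eq_constantCoeff_apply, rt_const r hr]; simp
  have h1 : Maj (f - 1) (C 1 * G ((r:ℝ)^2 * H) ^ 1) := by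
    intro n
    by_cases hn : n = 0
    · subst hn; rw [h0]; simp [G]
    · rw [map_sub, coeff_one, if_neg hn, sub_zero]; simpa using h n
  have h2 : X ^ 1 ∣ f - 1 := by
    rw [X_pow_dvd_iff]; intro m hm; obtain rfl : m = 0 := by omega
    exact h0
  have h3 := h1.ev_le hR hx (by nlinarith) h2
  have h4 : ev x f = ev x (f - 1) + 1 := by
    rw [ev, ev, ← evR_one x, ← evR_add (h1.SR hR.le hx (by nlinarith)) (SR_one x)]
    congr 1
    simp [toRS]
  rw [h4]
  have := (abs_le.1 h3).1
  nlinarith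

lemma th_SR (r H h : ℕ) (hr : r ≠ 0) (hh : h ≤ H) {x : ℝ} (hx : 0 ≤ x)
    (hRx : (r:ℝ)^2 * H * x < 1) : SR x (toRS (th r h)) :=
  (maj_th r H h hr hh).SR (by positivity) hx hRx

lemma th_ev_pos (r H h : ℕ) (hr : r ≠ 0) (hh : h ≤ H) {x : ℝ} (hx : 0 ≤ x)
    (hRx : 8 * ((r:ℝ)^2 * H * x) ≤ 1) : 0 < ev x (th r h) := by
  have h1 := SR.prod (x := x) (Finset.range h) (fun j => toRS (rescale ((j:ℤ) + 1) (rt r)))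
    (fun j hj => rescale_rt_SR r H j hr (by rw [Finset.mem_range] at hj; omega) hx (by linarith))
  rw [ev, th, toRS, map_prod, h1.2]
  exact Finset.prod_pos fun j hj =>
    rescale_rt_pos r H j hr (by rw [Finset.mem_range] at hj; omega) hx hRx

lemma th_ev_pow (r H h : ℕ) (hr : r ≠ 0) (hh : h ≤ H) {x : ℝ} (hx : 0 ≤ x)
    (hRx : (r:ℝ)^2 * H * x < 1) : ev x (th r h) ^ r =
      ∏ j ∈ Finset.range h, (1 + (r:ℝ)^2 * (j + 1) * x) := by
  rw [← toR_w_eval, ← ev_poly, ← th_pow r h hr, ev, ev, toRS, toRS, map_pow,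
    evR_pow (th_SR r H h hr hh hx hRx)]

section
variable {ι : Type*} [Fintype ι]

/-- iterated derivative of the auxiliary function -/
noncomputable def Lk (r H : ℕ) (hs : ι → ℕ) (A : ι → Polynomial ℤ) (k : ℕ) : ℤ⟦X⟧ :=
  ∑ i, (stp (w r H) (rho r H (hs i)) k (A i) : ℤ⟦X⟧) * th r (hs i)

lemma Lk_succ (r H : ℕ) (hr : r ≠ 0) (hs : ι → ℕ) (hH : ∀ i, hs i ≤ H) (A : ι → Polynomial ℤ)
    (k : ℕ) : Lk r H hs A (k+1) = (w r H : ℤ⟦X⟧) * d⁄dX ℤ (Lk r H hs A k) := by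
  rw [Lk, Lk, map_sum, Finset.mul_sum]
  refine Finset.sum_congr rfl fun i _ => ?_
  have h := th_ode r H (hs i) hr (hH i)
  rw [Derivation.leibniz, derivative_coe, stp, Polynomial.coe_add, Polynomial.coe_mul,
    Polynomial.coe_mul, smul_eq_mul, smul_eq_mul]
  linear_combination -(stp (w r H) (rho r H (hs i)) k (A i) : ℤ⟦X⟧) * h

lemma dvd_deriv (f : ℤ⟦X⟧) (t : ℕ) (h : X ^ t ∣ f) : X ^ (t - 1) ∣ d⁄dX ℤ f := by
  rw [X_pow_dvd_iff] at h ⊢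
  intro m hm
  rw [coeff_derivative, h (m+1) (by omega), zero_mul]

lemma Lk_dvd (r H : ℕ) (hr : r ≠ 0) (hs : ι → ℕ) (hH : ∀ i, hs i ≤ H) (A : ι → Polynomial ℤ)
    (T : ℕ) (hT : X ^ T ∣ Lk r H hs A 0) (k : ℕ) : X ^ (T - k) ∣ Lk r H hs A k := by
  induction k with
  | zero => simpa using hT
  | succ k ih =>
    rw [Lk_succ r H hr hs hH]
    have := dvd_deriv _ _ ih
    rw [Nat.sub_sub] at this
    exact this.mul_left _

lemma Lk_bound (r H : ℕ) (hr : r ≠ 0) (hH1 : 1 ≤ H) (hs : ι → ℕ) (hH : ∀ i, hs i ≤ H)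
    (A : ι → Polynomial ℤ) (a : ℝ) (hA : ∀ i n, |(((A i).coeff n : ℤ) : ℝ)| ≤ a)
    (T : ℕ) (hT : X ^ T ∣ Lk r H hs A 0) (k : ℕ) {x : ℝ} (hx : 0 ≤ x)
    (hRx : 8 * ((r:ℝ)^2 * H * x) ≤ 1) :
    |∑ i, (toR (stp (w r H) (rho r H (hs i)) k (A i))).eval x * ev x (th r (hs i))| ≤
      Fintype.card ι * (a * cst r H k) * 2 ^ (1 + k * (H + 1) + H) *
        (2 * ((r:ℝ)^2 * H * x)) ^ (T - k) := by
  have hH0 : (0:ℝ) < H := by exact_mod_cast (by omega : 0 < H)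
  have hR : (0:ℝ) < (r:ℝ)^2 * H := by positivity
  have h1 : ∀ i ∈ Finset.univ, Maj ((stp (w r H) (rho r H (hs i)) k (A i) : ℤ⟦X⟧) * th r (hs i))
      (C (a * cst r H k) * G ((r:ℝ)^2 * H) ^ (1 + k * (H + 1) + H)) := by
    intro i _
    have := (maj_stp r H (hs i) hr (hH i) hH1 (A i) a (hA i) k).mul (maj_th r H (hs i) hr (hH i))
    convert this using 1
    rw [pow_add]; simp only [map_mul, map_one]; ring
  have h2 := Maj.sum _ _ _ h1
  rw [← mul_assoc, ← map_mul, Finset.card_univ] at h2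
  have h3 := h2.ev_le hR hx (by nlinarith) (Lk_dvd r H hr hs hH A T hT k)
  have h4 : ev x (∑ i, (stp (w r H) (rho r H (hs i)) k (A i) : ℤ⟦X⟧) * th r (hs i)) =
      ∑ i, (toR (stp (w r H) (rho r H (hs i)) k (A i))).eval x * ev x (th r (hs i)) := by
    rw [ev, toRS, map_sum, (SR.sum _ _ fun i hi => (h1 i hi).SR hR.le hx (by nlinarith)).2]
    refine Finset.sum_congr rfl fun i _ => ?_
    rw [toRS, map_mul, evR_mul, ← ev_poly]
    · rfl
    · have h5 := SR_poly x (toR (stp (w r H) (rho r H (hs i)) k (A i)))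
      rw [← toRS_poly] at h5
      exact h5
    · exact th_SR r H _ hr (hH i) hx (by linarith)
  rw [h4] at h3
  rw [show 2 * ((r:ℝ)^2 * H * x) = 2 * ((r:ℝ)^2 * H) * x by ring]
  exact h3
end

lemma stp_eval_bound (r H h : ℕ) (hr : r ≠ 0) (hH1 : 1 ≤ H) (hH : h ≤ H)
    (A : Polynomial ℤ) (a : ℝ) (hA : ∀ n, |((A.coeff n : ℤ) : ℝ)| ≤ a) (k : ℕ) {x : ℝ} (hx : 0 ≤ x)
    (hRx : 8 * ((r:ℝ)^2 * H * x) ≤ 1) :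
    |(toR (stp (w r H) (rho r H h) k A)).eval x| ≤ (a * cst r H k) * 2 ^ (1 + k * (H + 1)) := by
  have hH0 : (0:ℝ) < H := by exact_mod_cast (by omega : 0 < H)
  have hR : (0:ℝ) < (r:ℝ)^2 * H := by positivity
  have h := (maj_stp r H h hr hH hH1 A a hA k).ev_le (t := 0) hR hx (by nlinarith) (by simp)
  rw [ev_poly, pow_zero, mul_one] at h
  exact h

lemma lin_deg (r j : ℕ) : (lin r j).natDegree ≤ 1 := by
  unfold lin
  compute_degree

lemma w_deg (r H : ℕ) : (w r H).natDegree ≤ H := by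
  unfold w
  refine (Polynomial.natDegree_prod_le _ _).trans ?_
  refine (Finset.sum_le_card_nsmul _ _ 1 fun j _ => lin_deg r j).trans ?_
  simp

lemma rho_deg (r H h : ℕ) : (rho r H h).natDegree ≤ H := by
  unfold rho
  refine Polynomial.natDegree_sum_le_of_forall_le _ _ fun j _ => ?_
  refine (Polynomial.natDegree_C_mul_le _ _).trans ?_
  refine (Polynomial.natDegree_prod_le _ _).trans ?_
  refine (Finset.sum_le_card_nsmul _ _ 1 fun j _ => lin_deg r j).trans ?_
  simpa using (Finset.card_le_card (Finset.erase_subset j (Finset.range H)))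

section
attribute [local instance] Matrix.seminormedAddCommGroup

open Polynomial in
lemma siegel (r H D : ℕ) (hr : r ≠ 0) (hH1 : 1 ≤ H) (hs : Fin 12 → ℕ) (hH : ∀ i, hs i ≤ H) :
    ∃ A : Fin 12 → Polynomial ℤ, (∃ i, A i ≠ 0) ∧ (∀ i, (A i).natDegree ≤ D) ∧
      (∀ i n, |(((A i).coeff n : ℤ) : ℝ)| ≤
        12 * (D + 1) * (2 ^ H * (2 * ((r:ℝ)^2 * H)) ^ (6 * (D + 1)))) ∧
      PowerSeries.X ^ (6 * (D + 1)) ∣ Lk r H hs A 0 := by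
  have hr1 : (1:ℝ) ≤ r := by exact_mod_cast Nat.one_le_iff_ne_zero.2 hr
  have hH1' : (1:ℝ) ≤ H := by exact_mod_cast hH1
  have hR1 : (1:ℝ) ≤ (r:ℝ)^2 * H := by nlinarith [one_le_pow₀ hr1 (n := 2)]
  set R := (r:ℝ)^2 * H with hR
  set T := 6 * (D + 1) with hT
  let M : Matrix (Fin T) (Fin 12 × Fin (D+1)) ℤ := fun l p =>
    if (p.2 : ℕ) ≤ l then PowerSeries.coeff ((l:ℕ) - p.2) (th r (hs p.1)) else 0
  set B := (2:ℝ) ^ H * (2 * R) ^ T with hB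
  have hB1 : 1 ≤ B := one_le_mul_of_one_le_of_one_le (one_le_pow₀ (by norm_num))
    (one_le_pow₀ (by linarith))
  have hMB : ‖M‖ ≤ B := by
    rw [Matrix.norm_le_iff (by linarith)]
    intro l p
    simp only [M]
    split_ifs with hlp
    · have := (maj_th r H (hs p.1) hr (hH p.1)).coeff_le (by linarith) ((l:ℕ) - p.2)
      rw [Int.norm_eq_abs]
      refine this.trans ?_
      rw [one_mul, hB]
      have h3 : (l:ℕ) - (p.2:ℕ) ≤ T := by omega
      have : (1:ℝ) ≤ 2 * R := by linarith
      gcongr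
    · simp; linarith
  have hcard : Fintype.card (Fin 12 × Fin (D+1)) = 12 * (D + 1) := by simp
  obtain ⟨t, ht0, htM, htn⟩ := Int.Matrix.exists_ne_zero_int_vec_norm_le M
    (by simp [hT]) (by simp [hT])
  have hexp : ((Fintype.card (Fin T) : ℝ) / ((Fintype.card (Fin 12 × Fin (D+1)) : ℝ) - Fintype.card (Fin T))) = 1 := by
    rw [hcard, Fintype.card_fin, hT]; push_cast; field_simp; ring
  rw [hexp, Real.rpow_one, hcard] at htn
  refine ⟨fun i => ∑ q : Fin (D+1), Polynomial.monomial (q:ℕ) (t (i, q)), ?_, ?_, ?_, ?_⟩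
  · by_contra hcon
    push Not at hcon
    apply ht0
    funext ⟨i, q⟩
    have := congrArg (Polynomial.coeff · (q:ℕ)) (hcon i)
    simpa [Polynomial.finsetSum_coeff, Polynomial.coeff_monomial, Fin.val_inj] using this
  · intro i
    refine Polynomial.natDegree_sum_le_of_forall_le _ _ fun q _ => ?_
    exact (Polynomial.natDegree_monomial_le _).trans (by omega)
  · intro i n
    have hb : ∀ p, |((t p : ℤ) : ℝ)| ≤ 12 * (D + 1) * B := by
      intro p
      rw [← Int.norm_eq_abs]
      refine (norm_le_pi_norm t p).trans (htn.trans ?_)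
      push_cast
      gcongr
      exact max_le hB1 hMB
    simp only [Polynomial.finsetSum_coeff, Polynomial.coeff_monomial]
    by_cases hn : n < D + 1
    · rw [Finset.sum_eq_single (⟨n, hn⟩ : Fin (D+1))]
      · simpa using hb _
      · intro b _ hbn
        rw [if_neg]; intro h; exact hbn (Fin.ext h)
      · simp
    · rw [Finset.sum_eq_zero]
      · simp; positivity
      · intro b _; rw [if_neg]; omega
  · rw [PowerSeries.X_pow_dvd_iff]
    intro l hl
    have h1 := congrFun htM ⟨l, hl⟩
    simp only [Matrix.mulVec, dotProduct, Fintype.sum_prod_type, Pi.zero_apply] at h1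
    rw [Lk, map_sum, ← h1]
    refine Finset.sum_congr rfl fun i _ => ?_
    simp only [stp]
    rw [coe_sum, Finset.sum_mul, map_sum]
    refine Finset.sum_congr rfl fun q _ => ?_
    simp only [M]
    have hmon : PowerSeries.monomial (q:ℕ) (t (i, q)) =
        PowerSeries.C (t (i, q)) * (PowerSeries.X : ℤ⟦X⟧) ^ (q:ℕ) := by
      rw [PowerSeries.X_pow_eq, ← PowerSeries.smul_eq_C_mul, ← map_smul, smul_eq_mul, mul_one]
    rw [Polynomial.coe_monomial, hmon, mul_assoc, PowerSeries.coeff_C_mul,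
      PowerSeries.coeff_X_pow_mul', mul_comm]
end

end PFS


namespace PFS

lemma num_E (r H D k n : ℕ) (c C1 : ℝ) (hr : 1 ≤ r) (hH : 9 * 2 ^ 12 * r ^ 14 ≤ H)
    (hc1 : 1 ≤ c) (hc : c ≤ H) (hC1 : 1 ≤ C1) (hC : C1 ≤ H)
    (hn2 : n ≤ H ^ 35) (hn1 : 1 ≤ n) (hD1 : H ^ 16 ≤ D + 1) (hD2 : D + 1 ≤ H ^ 34) (hk : k ≤ 2 * H ^ 14) :
    ((r:ℝ)^2) ^ (k * H) * (n:ℝ) ^ (k * H) * (n:ℝ) ^ H * (144 * (D + 1)) * 2 ^ H * cst r H k *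
      2 ^ (1 + k * (H + 1) + H) * C1 * c * (n:ℝ) ^ (k + 1) ≤ (H:ℝ) ^ (D + 1) := by
  have hr14 : 1 ≤ r ^ 14 := Nat.one_le_pow _ _ hr
  have hHbig : 36864 ≤ H := by omega
  have hrH : r ≤ H := by
    have : r ≤ r ^ 14 := Nat.le_self_pow (by norm_num) r
    omega
  have hq1 : (1:ℝ) ≤ H := by exact_mod_cast (by omega : 1 ≤ H)
  have hrq : (r:ℝ) ≤ H := by exact_mod_cast hrH
  have h2q : (2:ℝ) ≤ H := by exact_mod_cast (by omega : 2 ≤ H)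
  have h144 : (144:ℝ) ≤ H := by exact_mod_cast (by omega : 144 ≤ H)
  have hnq : (n:ℝ) ≤ (H:ℝ) ^ 35 := by exact_mod_cast hn2
  have hDq : ((D:ℝ) + 1) ≤ (H:ℝ) ^ 34 := by exact_mod_cast hD2
  have hH1 : ((H:ℝ) + 1) ≤ (H:ℝ) ^ 2 := by nlinarith
  have hkq : (k:ℝ) ≤ (H:ℝ) ^ 15 := by
    have : (k:ℝ) ≤ 2 * (H:ℝ) ^ 14 := by exact_mod_cast hk
    calc (k:ℝ) ≤ 2 * (H:ℝ) ^ 14 := this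
      _ ≤ H * (H:ℝ) ^ 14 := by gcongr
      _ = _ := by ring
  have hcst : cst r H k ≤ (H:ℝ) ^ (20 * k) := by
    unfold cst
    have hf : (k.factorial : ℝ) ≤ (k:ℝ) ^ k := by exact_mod_cast Nat.factorial_le_pow k
    calc ((r:ℝ)^2 * H) ^ k * ((H:ℝ) + 1) ^ k * (k.factorial : ℝ)
        ≤ ((H:ℝ)^2 * H) ^ k * ((H:ℝ) ^ 2) ^ k * ((H:ℝ) ^ 15) ^ k := by
          have : (k:ℝ) ^ k ≤ ((H:ℝ) ^ 15) ^ k := by gcongr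
          have := hf.trans this
          gcongr
      _ = _ := by rw [← mul_pow, ← mul_pow, ← pow_succ, ← pow_add, ← pow_add, ← pow_mul]
  have hcst0 : 0 ≤ cst r H k := by unfold cst; positivity
  calc _ ≤ ((H:ℝ)^2) ^ (k * H) * ((H:ℝ)^35) ^ (k * H) * ((H:ℝ)^35) ^ H * (H * (H:ℝ) ^ 34) * (H:ℝ) ^ H *
        (H:ℝ) ^ (20 * k) * (H:ℝ) ^ (1 + k * (H + 1) + H) * H * H * ((H:ℝ)^35) ^ (k + 1) := by
        gcongr
    _ = (H:ℝ) ^ (2 * (k * H) + 35 * (k * H) + 35 * H + 35 + H + 20 * k + (1 + k * (H + 1) + H) + 1 + 1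
        + 35 * (k + 1)) := by
        simp only [pow_add, pow_mul, pow_one]; ring
    _ ≤ _ := by
        refine pow_le_pow_right₀ hq1 (le_trans ?_ hD1)
        have h1 : k * H ≤ 2 * H ^ 15 := by
          calc k * H ≤ 2 * H ^ 14 * H := Nat.mul_le_mul_right _ hk
            _ = _ := by ring
        have h2 : H ≤ H ^ 15 := Nat.le_self_pow (by norm_num) H
        have h3 : H ^ 14 ≤ H ^ 15 := Nat.pow_le_pow_right (by omega) (by norm_num)
        have h4 : 36864 * H ^ 15 ≤ H ^ 16 := by
          calc 36864 * H ^ 15 ≤ H * H ^ 15 := Nat.mul_le_mul_right _ hHbig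
            _ = _ := by ring
        have h5 : k * (H + 1) = k * H + k := by ring
        rw [h5]
        omega

set_option maxHeartbeats 1000000 in
lemma num_main (r H D k n : ℕ) (c C1 g : ℝ) (hr : 1 ≤ r) (hH : 9 * 2 ^ 12 * r ^ 14 ≤ H)
    (hc1 : 1 ≤ c) (hc : c ≤ H) (hC1 : 1 ≤ C1) (hC : C1 ≤ H)
    (hn2 : n ≤ H ^ 35) (hn1 : H ^ 33 ≤ n) (hD1 : H ^ 16 ≤ D + 1) (hD2 : D + 1 ≤ H ^ 34)
    (hk : k ≤ 2 * H ^ 14) (hg : 0 < g) (hg2 : g ≤ c * (n:ℝ) ^ (4 * (D + 1)))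
    (hg1 : ((n:ℝ) / 3) ^ (2 * D) ≤ g) (a : ℝ)
    (ha : a = 12 * (D + 1) * (2 ^ H * (2 * ((r:ℝ)^2 * H)) ^ (6 * (D + 1)))) :
    ((r:ℝ)^2 * n) ^ (D + k * H) * ((n:ℝ) ^ H *
      (g * (12 * (a * cst r H k) * 2 ^ (1 + k * (H + 1) + H) * (2 * ((H:ℝ) / n)) ^ (6 * (D + 1) - k)) +
        12 * ((a * cst r H k) * 2 ^ (1 + k * (H + 1)) * (C1 / g)))) < 1 := by
  have hr14 : 1 ≤ r ^ 14 := Nat.one_le_pow _ _ hr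
  have hHbig : 36864 ≤ H := by omega
  have hq1 : (1:ℝ) ≤ H := by exact_mod_cast (by omega : 1 ≤ H)
  have hr1 : (1:ℝ) ≤ r := by exact_mod_cast hr
  have hq2 : (36864:ℝ) ≤ H := by exact_mod_cast hHbig
  have hn0 : 1 ≤ n := le_trans (Nat.one_le_pow _ _ (by omega)) hn1
  have hn0' : (1:ℝ) ≤ n := by exact_mod_cast hn0
  have hnq : (H:ℝ) ^ 33 ≤ n := by exact_mod_cast hn1
  have hHr : 9 * 2 ^ 12 * (r:ℝ) ^ 14 ≤ H := by exact_mod_cast hH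
  have hE := num_E r H D k n c C1 hr hH hc1 hc hC1 hC hn2 hn0 hD1 hD2 hk
  have hcst0 : 0 ≤ cst r H k := by unfold cst; positivity
  -- common factor
  set F := ((r:ℝ)^2) ^ (k * H) * (n:ℝ) ^ (k * H) * (n:ℝ) ^ H * (144 * (D + 1)) * 2 ^ H * cst r H k *
      2 ^ (1 + k * (H + 1) + H) with hF
  have hF0 : 0 ≤ F := by positivity
  have hkT : k ≤ 6 * (D + 1) := by
    have : H ^ 14 * 2 ≤ H ^ 16 := by
      calc H ^ 14 * 2 ≤ H ^ 14 * H ^ 2 := Nat.mul_le_mul_left _ (by nlinarith)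
        _ = _ := by ring
    omega
  have hHn : 2 * ((H:ℝ) / n) ≤ 1 := by
    rw [mul_div_assoc', div_le_one (by linarith)]
    refine le_trans ?_ hnq
    calc (2:ℝ) * H ≤ H * H := by gcongr; linarith
      _ = (H:ℝ)^2 := by ring
      _ ≤ _ := pow_le_pow_right₀ hq1 (by norm_num)
  -- powers of n
  have hnD : ((H:ℝ) ^ 33) ^ (D + 1) ≤ (n:ℝ) ^ (D + 1) := by gcongr
  have hnD0 : 0 < (n:ℝ) ^ (D + 1) := by positivity
  have hq0 : 0 < (H:ℝ) ^ (D + 1) := by positivity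
  -- first term
  have t1 : ((r:ℝ)^2 * n) ^ (D + k * H) * ((n:ℝ) ^ H *
      (g * (12 * (a * cst r H k) * 2 ^ (1 + k * (H + 1) + H) * (2 * ((H:ℝ) / n)) ^ (6 * (D + 1) - k))))
      ≤ 1 / 4 := by
    have hpow : (2 * ((H:ℝ) / n)) ^ (6 * (D + 1) - k) ≤ (2 * (H:ℝ)) ^ (6 * (D + 1)) * (n:ℝ) ^ k / (n:ℝ) ^ (6 * (D + 1)) := by
      rw [mul_div_assoc', div_pow, div_le_div_iff₀ (by positivity) (by positivity)]
      have e1 : (n:ℝ) ^ (6 * (D + 1)) = (n:ℝ) ^ k * (n:ℝ) ^ (6 * (D + 1) - k) := by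
        rw [← pow_add]; congr 1; omega
      have e2 : (2 * (H:ℝ)) ^ (6 * (D + 1) - k) ≤ (2 * (H:ℝ)) ^ (6 * (D + 1)) :=
        pow_le_pow_right₀ (by linarith) (by omega)
      rw [e1]
      calc _ ≤ (2 * (H:ℝ)) ^ (6 * (D + 1)) * ((n:ℝ) ^ k * (n:ℝ) ^ (6 * (D + 1) - k)) := by gcongr
        _ = _ := by ring
    have hconst : ((r:ℝ)^2) ^ D * (2 * ((r:ℝ)^2 * H)) ^ (6 * (D + 1)) * (2 * (H:ℝ)) ^ (6 * (D + 1)) ≤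
        (H:ℝ) ^ (13 * (D + 1)) := by
      calc _ ≤ ((r:ℝ)^2) ^ (D + 1) * (2 * ((r:ℝ)^2 * H)) ^ (6 * (D + 1)) * (2 * (H:ℝ)) ^ (6 * (D + 1)) := by
            gcongr
            · nlinarith
            · omega
        _ = (2 ^ 12 * (r:ℝ) ^ 14 * (H:ℝ) ^ 12) ^ (D + 1) := by
            rw [pow_mul, pow_mul, ← mul_pow, ← mul_pow]; congr 1; ring
        _ ≤ ((H:ℝ) * (H:ℝ) ^ 12) ^ (D + 1) := by
            gcongr
            nlinarith [pow_pos (by linarith : (0:ℝ) < r) 14]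
        _ = _ := by rw [← pow_succ', ← pow_mul]
    calc _ ≤ ((r:ℝ)^2 * n) ^ (D + k * H) * ((n:ℝ) ^ H *
      ((c * (n:ℝ) ^ (4 * (D + 1))) * (12 * (a * cst r H k) * 2 ^ (1 + k * (H + 1) + H) *
        ((2 * (H:ℝ)) ^ (6 * (D + 1)) * (n:ℝ) ^ k / (n:ℝ) ^ (6 * (D + 1)))))) := by
          have : 0 ≤ a := by rw [ha]; positivity
          gcongr
      _ = (F * c * (n:ℝ) ^ k) * (((r:ℝ)^2) ^ D * (2 * ((r:ℝ)^2 * H)) ^ (6 * (D + 1)) *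
            (2 * (H:ℝ)) ^ (6 * (D + 1))) * ((n:ℝ) ^ D * (n:ℝ) ^ (4 * (D + 1)) / (n:ℝ) ^ (6 * (D + 1))) := by
          rw [hF, ha, mul_pow _ (n:ℝ), pow_add _ D, pow_add _ D]; ring
      _ ≤ (F * C1 * c * (n:ℝ) ^ (k + 1)) * (H:ℝ) ^ (13 * (D + 1)) * (1 / (n:ℝ) ^ (D + 1)) := by
          have e3 : (n:ℝ) ^ D * (n:ℝ) ^ (4 * (D + 1)) / (n:ℝ) ^ (6 * (D + 1)) ≤ 1 / (n:ℝ) ^ (D + 1) := by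
            rw [div_le_div_iff₀ (by positivity) (by positivity), ← pow_add, ← pow_add, one_mul]
            exact pow_le_pow_right₀ hn0' (by omega)
          have e4 : F * c * (n:ℝ) ^ k ≤ F * C1 * c * (n:ℝ) ^ (k + 1) := by
            calc F * c * (n:ℝ) ^ k = (F * 1 * c) * (n:ℝ) ^ k := by ring
              _ ≤ _ := by
                  gcongr
                  omega
          gcongr
      _ ≤ (H:ℝ) ^ (D + 1) * (H:ℝ) ^ (13 * (D + 1)) * (1 / ((H:ℝ) ^ 33) ^ (D + 1)) := by
          gcongr
      _ = 1 / (H:ℝ) ^ (19 * (D + 1)) := by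
          rw [mul_one_div, div_eq_div_iff (by positivity) (by positivity), ← pow_mul, ← pow_add, ← pow_add, one_mul]
          congr 1; ring
      _ ≤ 1 / 4 := by
          have : (H:ℝ) ≤ (H:ℝ) ^ (19 * (D + 1)) := le_self_pow₀ hq1 (by omega)
          apply one_div_le_one_div_of_le (by norm_num); linarith
  have t2 : ((r:ℝ)^2 * n) ^ (D + k * H) * ((n:ℝ) ^ H *
      (12 * ((a * cst r H k) * 2 ^ (1 + k * (H + 1)) * (C1 / g)))) ≤ 1 / 4 := by
    have hconst : ((r:ℝ)^2) ^ D * (2 * ((r:ℝ)^2 * H)) ^ (6 * (D + 1)) * 9 ^ D ≤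
        (H:ℝ) ^ (7 * (D + 1)) := by
      calc _ ≤ ((r:ℝ)^2) ^ (D + 1) * (2 * ((r:ℝ)^2 * H)) ^ (6 * (D + 1)) * 9 ^ (D + 1) := by
            gcongr
            · nlinarith
            · omega
            · norm_num
            · omega
        _ = (9 * 2 ^ 6 * (r:ℝ) ^ 14 * (H:ℝ) ^ 6) ^ (D + 1) := by
            rw [pow_mul, ← mul_pow, ← mul_pow]; congr 1; ring
        _ ≤ ((H:ℝ) * (H:ℝ) ^ 6) ^ (D + 1) := by
            gcongr
            nlinarith [pow_pos (by linarith : (0:ℝ) < r) 14]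
        _ = _ := by rw [← pow_succ', ← pow_mul]
    calc _ ≤ ((r:ℝ)^2 * n) ^ (D + k * H) * ((n:ℝ) ^ H *
      (12 * ((a * cst r H k) * 2 ^ (1 + k * (H + 1) + H) * (C1 / ((n:ℝ) / 3) ^ (2 * D))))) := by
          have : 0 ≤ a := by rw [ha]; positivity
          have e5 : (2:ℝ) ^ (1 + k * (H + 1)) ≤ 2 ^ (1 + k * (H + 1) + H) :=
            pow_le_pow_right₀ (by norm_num) (Nat.le_add_right _ _)
          gcongr _ * (_ * (12 * (_ * ?_ * (_ / ?_))))
      _ = (F * C1 ) * (((r:ℝ)^2) ^ D * (2 * ((r:ℝ)^2 * H)) ^ (6 * (D + 1)) * 9 ^ D) *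
            ((n:ℝ) ^ D / (n:ℝ) ^ (2 * D)) := by
          have : ((n:ℝ) / 3) ^ (2 * D) = (n:ℝ) ^ (2 * D) / 9 ^ D := by
            rw [div_pow, pow_mul (3:ℝ)]; norm_num
          rw [this, hF, ha, mul_pow _ (n:ℝ), pow_add _ D, pow_add _ D, div_div_eq_mul_div]
          ring
      _ ≤ (F * C1 * c * (n:ℝ) ^ k) * (H:ℝ) ^ (7 * (D + 1)) * (n / (n:ℝ) ^ (D + 1)) := by
          have e3 : (n:ℝ) ^ D / (n:ℝ) ^ (2 * D) = n / (n:ℝ) ^ (D + 1) := by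
            rw [div_eq_div_iff (by positivity) (by positivity)]; ring
          have e4 : F * C1 ≤ F * C1 * c * (n:ℝ) ^ k := by
            calc F * C1 = F * C1 * 1 * 1 := by ring
              _ ≤ _ := by
                  gcongr
                  exact one_le_pow₀ hn0'
          rw [e3]
          gcongr
      _ = (F * C1 * c * (n:ℝ) ^ (k + 1)) * (H:ℝ) ^ (7 * (D + 1)) * (1 / (n:ℝ) ^ (D + 1)) := by
          ring
      _ ≤ (H:ℝ) ^ (D + 1) * (H:ℝ) ^ (7 * (D + 1)) * (1 / ((H:ℝ) ^ 33) ^ (D + 1)) := by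
          gcongr
      _ = 1 / (H:ℝ) ^ (25 * (D + 1)) := by
          rw [mul_one_div, div_eq_div_iff (by positivity) (by positivity), ← pow_mul, ← pow_add, ← pow_add, one_mul]
          congr 1; ring
      _ ≤ 1 / 4 := by
          have : (H:ℝ) ≤ (H:ℝ) ^ (25 * (D + 1)) := le_self_pow₀ hq1 (by omega)
          apply one_div_le_one_div_of_le (by norm_num); linarith
  rw [mul_add, mul_add]
  linarith

end PFS


namespace PFS

/-- the real `r`-th root of `c m!` -/
noncomputable def Gr (r : ℕ) (c : ℝ) (m : ℕ) : ℝ := (c * (m.factorial : ℝ)) ^ ((r:ℝ)⁻¹)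

lemma Gr_pos (r : ℕ) {c : ℝ} (hc : 1 ≤ c) (m : ℕ) : 0 < Gr r c m :=
  Real.rpow_pos_of_pos (by positivity) _

lemma Gr_pow (r : ℕ) (hr : r ≠ 0) {c : ℝ} (hc : 1 ≤ c) (m : ℕ) :
    Gr r c m ^ r = c * (m.factorial : ℝ) :=
  Real.rpow_inv_natCast_pow (by positivity) hr

lemma Gr_mono (r : ℕ) {c : ℝ} (hc : 1 ≤ c) {m m' : ℕ} (h : m ≤ m') : Gr r c m ≤ Gr r c m' := by
  unfold Gr
  have : (m.factorial : ℝ) ≤ m'.factorial := by exact_mod_cast Nat.factorial_le h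
  gcongr

lemma fact_prod (n h : ℕ) (hn : n ≠ 0) : ((n + h).factorial : ℝ) =
    n.factorial * ((n:ℝ) ^ h * ∏ j ∈ Finset.range h, (1 + ((j:ℝ) + 1) / n)) := by
  have hn' : (n:ℝ) ≠ 0 := by exact_mod_cast hn
  induction h with
  | zero => simp
  | succ h ih =>
    rw [← add_assoc, Nat.factorial_succ, Nat.cast_mul, ih, Finset.prod_range_succ]
    push_cast
    field_simp
    ring

lemma Gr_eq (r H n h : ℕ) (hr : r ≠ 0) {c : ℝ} (hc : 1 ≤ c) (hn : n ≠ 0) (hh : h ≤ H)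
    (hrh : r ∣ h) (hHn : 8 * H ≤ n) :
    Gr r c (n + h) = Gr r c n * (n:ℝ) ^ (h / r) * ev (1 / ((r:ℝ)^2 * n)) (th r h) := by
  have hn' : (n:ℝ) ≠ 0 := by exact_mod_cast hn
  have hr' : (r:ℝ) ≠ 0 := by exact_mod_cast hr
  have hnp : (0:ℝ) < n := by positivity
  have hx : (0:ℝ) ≤ 1 / ((r:ℝ)^2 * n) := by positivity
  have hRx : 8 * ((r:ℝ)^2 * H * (1 / ((r:ℝ)^2 * n))) ≤ 1 := by
    have : (8:ℝ) * H ≤ n := by exact_mod_cast hHn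
    have e : 8 * ((r:ℝ)^2 * H * (1 / ((r:ℝ)^2 * n))) = 8 * H / n := by field_simp
    rw [e, div_le_one hnp]; exact this
  have hp := th_ev_pos r H h hr hh hx hRx
  have hg := Gr_pos r hc n
  refine (pow_left_inj₀ (Gr_pos r hc _).le (by positivity) hr).1 ?_
  rw [Gr_pow r hr hc, mul_pow, mul_pow, Gr_pow r hr hc, th_ev_pow r H h hr hh hx (by linarith),
    ← pow_mul, Nat.div_mul_cancel hrh, fact_prod n h hn]
  have : ∀ j : ℕ, 1 + (r:ℝ)^2 * (j + 1) * (1 / ((r:ℝ)^2 * n)) = 1 + ((j:ℝ) + 1) / n := by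
    intro j; field_simp
  simp_rw [this]
  ring

lemma int_eval (p : Polynomial ℤ) (m y : ℕ) (hy : y ≠ 0) (hp : p.natDegree ≤ m) :
    ∃ I : ℤ, (y:ℝ) ^ m * (toR p).eval (1 / (y:ℝ)) = I := by
  have hy' : (y:ℝ) ≠ 0 := by exact_mod_cast hy
  refine ⟨∑ i ∈ Finset.range (m+1), p.coeff i * (y:ℤ) ^ (m - i), ?_⟩
  have hd : (toR p).natDegree < m + 1 := by
    have := Polynomial.natDegree_map_le (f := Int.castRingHom ℝ) (p := p)
    exact lt_of_le_of_lt this (by omega)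
  rw [Polynomial.eval_eq_sum_range' hd, Finset.mul_sum]
  push_cast
  refine Finset.sum_congr rfl fun i hi => ?_
  rw [Finset.mem_range] at hi
  have e : (y:ℝ) ^ m = (y:ℝ) ^ (m - i) * (y:ℝ) ^ i := by rw [← pow_add]; congr 1; omega
  rw [Polynomial.coeff_map, e]
  simp
  field_simp

lemma Gr_upper (r n D : ℕ) (hr : r ≠ 0) {c : ℝ} (hc : 1 ≤ c) (hn : 1 ≤ n)
    (h : n ≤ 4 * r * (D + 1)) : Gr r c n ≤ c * (n:ℝ) ^ (4 * (D + 1)) := by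
  have hn' : (1:ℝ) ≤ n := by exact_mod_cast hn
  refine (pow_le_pow_iff_left₀ (Gr_pos r hc n).le (by positivity) hr).1 ?_
  rw [Gr_pow r hr hc, mul_pow, ← pow_mul]
  have h1 : (n.factorial : ℝ) ≤ (n:ℝ) ^ n := by exact_mod_cast Nat.factorial_le_pow n
  have h2 : (n:ℝ) ^ n ≤ (n:ℝ) ^ (4 * (D + 1) * r) := pow_le_pow_right₀ hn' (by nlinarith)
  have h3 : c ≤ c ^ r := le_self_pow₀ hc hr
  exact mul_le_mul h3 (h1.trans h2) (by positivity) (by positivity)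

lemma Gr_lower (r n D : ℕ) (hr : r ≠ 0) {c : ℝ} (hc : 1 ≤ c) (hn : 3 ≤ n)
    (h : 2 * r * D ≤ n) : ((n:ℝ) / 3) ^ (2 * D) ≤ Gr r c n := by
  have hn' : (3:ℝ) ≤ n := by exact_mod_cast hn
  refine (pow_le_pow_iff_left₀ (by positivity) (Gr_pos r hc n).le hr).1 ?_
  rw [Gr_pow r hr hc, ← pow_mul]
  have h2 : ((n:ℝ) / 3) ^ (2 * D * r) ≤ ((n:ℝ) / 3) ^ n :=
    pow_le_pow_right₀ (by linarith) (by nlinarith)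
  have h4 : ((n:ℝ) / 3) ^ n ≤ n.factorial := by
    have h5 := Real.pow_div_factorial_le_exp (n:ℝ) (by positivity) n
    have h6 : Real.exp (n:ℝ) ≤ 3 ^ n := by
      rw [← Real.exp_one_pow]
      have := Real.exp_one_lt_d9
      gcongr
      linarith
    have h7 := h5.trans h6
    rw [div_le_iff₀ (by positivity)] at h7
    rw [div_pow, div_le_iff₀ (by positivity)]
    linarith
  have : (n.factorial : ℝ) ≤ c * n.factorial := le_mul_of_one_le_left (by positivity) hc
  linarith

lemma vanish (r : ℕ) (hr : 2 ≤ r) (c C1 : ℝ) (H N D n k : ℕ) (hH : 9 * 2 ^ 12 * r ^ 14 ≤ H)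
    (hc1 : 1 ≤ c) (hc : c ≤ H) (hC1 : 1 ≤ C1) (hC : C1 ≤ H)
    (hn2 : n ≤ H ^ 35) (hn1 : H ^ 33 ≤ n) (hD1 : H ^ 16 ≤ D + 1) (hD2 : D + 1 ≤ H ^ 34)
    (hk : k ≤ 2 * H ^ 14) (hnD1 : n ≤ 4 * r * (D + 1)) (hnD2 : 2 * r * D ≤ n)
    (hs : Fin 12 → ℕ) (hsH : ∀ i, hs i ≤ H) (hsr : ∀ i, r ∣ hs i)
    (A : Fin 12 → Polynomial ℤ) (hAd : ∀ i, (A i).natDegree ≤ D)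
    (hA : ∀ i m, |(((A i).coeff m : ℤ) : ℝ)| ≤
        12 * (D + 1) * (2 ^ H * (2 * ((r:ℝ)^2 * H)) ^ (6 * (D + 1))))
    (hT : PowerSeries.X ^ (6 * (D + 1)) ∣ Lk r H hs A 0)
    (Z : Fin 12 → ℤ) (hZ : ∀ i, |(Z i : ℝ) - Gr r c (n + hs i)| ≤ C1 / Gr r c (n + hs i)) :
    ∑ i, (toR (stp (w r H) (rho r H (hs i)) k (A i))).eval (1 / ((r:ℝ)^2 * n)) *
      ((Z i : ℝ) * (n:ℝ) ^ (H - hs i / r)) = 0 := by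
  have hr0 : r ≠ 0 := by omega
  have hr14 : 1 ≤ r ^ 14 := Nat.one_le_pow _ _ (by omega)
  have hHbig : 36864 ≤ H := by omega
  have hHn : 8 * H ≤ n := by
    refine le_trans ?_ hn1
    calc 8 * H ≤ H * H := by nlinarith
      _ = H ^ 2 := by ring
      _ ≤ _ := Nat.pow_le_pow_right (by omega) (by norm_num)
  have hn0 : n ≠ 0 := by omega
  have hnp : (0:ℝ) < n := by exact_mod_cast (by omega : 0 < n)
  have hrp : (0:ℝ) < r := by exact_mod_cast (by omega : 0 < r)
  set x := 1 / ((r:ℝ)^2 * n) with hxdef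
  have hx : 0 ≤ x := by positivity
  have hRx' : (r:ℝ)^2 * H * x = H / n := by rw [hxdef]; field_simp
  have hRx : 8 * ((r:ℝ)^2 * H * x) ≤ 1 := by
    have : (8:ℝ) * H ≤ n := by exact_mod_cast hHn
    rw [hRx', mul_div_assoc', div_le_one hnp]; exact this
  set a := 12 * ((D:ℝ) + 1) * (2 ^ H * (2 * ((r:ℝ)^2 * H)) ^ (6 * (D + 1))) with ha
  set g := Gr r c n with hgdef
  have hg : 0 < g := Gr_pos r hc1 n
  have hnum := num_main r H D k n c C1 g (by omega) hH hc1 hc hC1 hC hn2 hn1 hD1 hD2 hk hg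
    (Gr_upper r n D hr0 hc1 (by omega) hnD1) (Gr_lower r n D hr0 hc1 (by omega) hnD2) a ha
  have hcst0 : 0 ≤ cst r H k := by unfold cst; positivity
  set e : Fin 12 → ℝ := fun i => (toR (stp (w r H) (rho r H (hs i)) k (A i))).eval x with he
  have heb : ∀ i, |e i| ≤ (a * cst r H k) * 2 ^ (1 + k * (H + 1)) := fun i =>
    stp_eval_bound r H (hs i) hr0 (by omega) (hsH i) (A i) a (hA i) k hx hRx
  have hL := Lk_bound r H hr0 (by omega) hs hsH A a hA _ hT k hx hRx
  rw [hRx', Fintype.card_fin] at hL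
  -- splitting
  set V : Fin 12 → ℝ := fun i => (Z i : ℝ) * (n:ℝ) ^ (H - hs i / r) with hV
  have hdiv : ∀ i, hs i / r ≤ H := fun i => (Nat.div_le_self _ _).trans (hsH i)
  have hδ : ∀ i, |V i - (n:ℝ) ^ H * g * ev x (th r (hs i))| ≤ (n:ℝ) ^ H * (C1 / g) := by
    intro i
    have e1 := Gr_eq r H n (hs i) hr0 hc1 hn0 (hsH i) (hsr i) hHn
    have e2 : V i - (n:ℝ) ^ H * g * ev x (th r (hs i)) =
        ((Z i : ℝ) - Gr r c (n + hs i)) * (n:ℝ) ^ (H - hs i / r) := by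
      rw [e1, hV]
      have : (n:ℝ) ^ H = (n:ℝ) ^ (hs i / r) * (n:ℝ) ^ (H - hs i / r) := by
        rw [← pow_add]; congr 1; have := hdiv i; omega
      rw [this]; ring
    rw [e2, abs_mul, mul_comm, abs_of_nonneg (by positivity : (0:ℝ) ≤ (n:ℝ) ^ (H - hs i / r))]
    have hn1' : (1:ℝ) ≤ n := by exact_mod_cast (by omega : 1 ≤ n)
    refine mul_le_mul (pow_le_pow_right₀ hn1' (Nat.sub_le _ _)) ((hZ i).trans ?_) (abs_nonneg _)
      (by positivity)
    have := Gr_mono r hc1 (Nat.le_add_right n (hs i))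
    gcongr
  have hsum : ∑ i, e i * V i = (n:ℝ) ^ H * (g * ∑ i, e i * ev x (th r (hs i))) +
      ∑ i, e i * (V i - (n:ℝ) ^ H * g * ev x (th r (hs i))) := by
    rw [← mul_assoc, Finset.mul_sum, ← Finset.sum_add_distrib]
    refine Finset.sum_congr rfl fun i _ => ?_
    ring
  have hb2 : |∑ i, e i * (V i - (n:ℝ) ^ H * g * ev x (th r (hs i)))| ≤
      12 * (((a * cst r H k) * 2 ^ (1 + k * (H + 1))) * ((n:ℝ) ^ H * (C1 / g))) := by
    refine (Finset.abs_sum_le_sum_abs _ _).trans ?_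
    refine (Finset.sum_le_card_nsmul _ _
      (((a * cst r H k) * 2 ^ (1 + k * (H + 1))) * ((n:ℝ) ^ H * (C1 / g))) fun i _ => ?_).trans
      (le_of_eq ?_)
    · rw [abs_mul]
      exact mul_le_mul (heb i) (hδ i) (abs_nonneg _) ((abs_nonneg _).trans (heb i))
    · simp
  have hb : |((r:ℝ)^2 * n) ^ (D + k * H) * ∑ i, e i * V i| < 1 := by
    refine lt_of_le_of_lt ?_ hnum
    rw [abs_mul, abs_of_nonneg (by positivity : (0:ℝ) ≤ ((r:ℝ)^2 * n) ^ (D + k * H))]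
    refine mul_le_mul_of_nonneg_left ?_ (by positivity)
    rw [hsum]
    refine (abs_add_le _ _).trans ?_
    rw [mul_add]
    refine add_le_add ?_ (hb2.trans (le_of_eq (by ring)))
    rw [abs_mul, abs_mul, abs_of_pos hg, abs_of_nonneg (by positivity : (0:ℝ) ≤ (n:ℝ) ^ H)]
    have hL' : |∑ i, e i * ev x (th r (hs i))| ≤ _ := hL
    push_cast at hL'
    gcongr
  -- integrality
  have hIex : ∀ i, ∃ I : ℤ, ((r:ℝ)^2 * n) ^ (D + k * H) * (e i * V i) = I := by
    intro i
    obtain ⟨I, hI⟩ := int_eval (stp (w r H) (rho r H (hs i)) k (A i)) (D + k * H) (r ^ 2 * n)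
      (by positivity) (stp_natDegree _ _ _ _ _ (w_deg r H) (rho_deg r H _) (hAd i) k)
    push_cast at hI
    refine ⟨I * (Z i * (n:ℤ) ^ (H - hs i / r)), ?_⟩
    push_cast
    rw [← hI]
    simp only [he, hV, hxdef]
    ring
  choose I hI using hIex
  have hI2 : ((r:ℝ)^2 * n) ^ (D + k * H) * ∑ i, e i * V i = ((∑ i, I i : ℤ) : ℝ) := by
    rw [Finset.mul_sum]
    push_cast
    exact Finset.sum_congr rfl fun i _ => hI i
  rw [hI2] at hb
  have hb' : |∑ i, I i| < 1 := by exact_mod_cast hb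
  rw [Int.abs_lt_one_iff.1 hb', Int.cast_zero] at hI2
  rcases mul_eq_zero.1 hI2 with h | h
  · exact absurd h (by positivity)
  · exact h

lemma core (r : ℕ) (hr : 2 ≤ r) (c C1 : ℝ) (H N : ℕ) (hH : 9 * 2 ^ 12 * r ^ 14 ≤ H)
    (hc1 : 1 ≤ c) (hc : c ≤ H) (hC1 : 1 ≤ C1) (hC : C1 ≤ H)
    (hN1 : H ^ 33 ≤ N) (hN2 : N ≤ H ^ 34)
    (hs : Fin 12 → ℕ) (hinj : Function.Injective hs) (hsH : ∀ i, hs i ≤ H) (hsr : ∀ i, r ∣ hs i)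
    (S : Finset ℕ) (hS : ∀ n ∈ S, N ≤ n ∧ n < 2 * N)
    (hZ : ∀ n ∈ S, ∀ i, ∃ Z : ℤ, 0 < Z ∧ |(Z : ℝ) - Gr r c (n + hs i)| ≤ C1 / Gr r c (n + hs i))
    (hcard : N ≤ S.card * H ^ 13) : False := by
  have hr0 : r ≠ 0 := by omega
  have hrp : (0:ℝ) < r := by exact_mod_cast (by omega : 0 < r)
  have hr14 : 1 ≤ r ^ 14 := Nat.one_le_pow _ _ (by omega)
  have hrr : r ≤ r ^ 14 := Nat.le_self_pow (by norm_num) r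
  have hHbig : 36864 ≤ H := by omega
  have hN0 : 1 ≤ N := le_trans (Nat.one_le_pow _ _ (by omega)) hN1
  set D := N / (2 * r) with hD
  have hDa : 2 * r * D ≤ N := Nat.mul_div_le _ _
  have hDb : N < 2 * r * (D + 1) := Nat.lt_mul_div_succ N (by omega)
  have hD1 : H ^ 16 ≤ D + 1 := by
    by_contra hcon
    push Not at hcon
    have : 2 * r * (D + 1) ≤ H ^ 33 := by
      calc 2 * r * (D + 1) ≤ H * H ^ 16 := Nat.mul_le_mul (by omega) hcon.le
        _ = H ^ 17 := by ring
        _ ≤ _ := Nat.pow_le_pow_right (by omega) (by norm_num)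
    omega
  have hDN : 4 * D ≤ N := by nlinarith
  have hHN : H * H ≤ N := by
    refine le_trans ?_ hN1
    calc H * H = H ^ 2 := by ring
      _ ≤ _ := Nat.pow_le_pow_right (by omega) (by norm_num)
  have hHN' : 36864 * H ≤ N := le_trans (Nat.mul_le_mul_right _ hHbig) hHN
  have hD2 : D + 1 ≤ H ^ 34 := by omega
  obtain ⟨A, hA0, hAd, hA, hT⟩ := siegel r H D hr0 (by omega) hs hsH
  choose! Z hZ0 hZ using hZ
  set Zs : Finset ℝ := S.image fun n : ℕ => 1 / ((r:ℝ)^2 * n) with hZs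
  have hSpos : ∀ n ∈ S, (0:ℝ) < n := fun n hn => by
    have := (hS n hn).1
    exact_mod_cast (by omega : 0 < n)
  have hZcard : Zs.card = S.card := by
    refine Finset.card_image_of_injOn ?_
    intro m hm n hn h
    have h1 := hSpos m hm
    have h2 := hSpos n hn
    simp only at h
    rw [div_eq_div_iff (by positivity) (by positivity)] at h
    have : (r:ℝ)^2 * ((m:ℝ) - n) = 0 := by linear_combination -h
    rcases mul_eq_zero.1 this with h3 | h3
    · exact absurd h3 (by positivity)
    · exact_mod_cast sub_eq_zero.1 h3
  set V : ℝ → Fin 12 → ℝ := fun z i => (Z ⌊1 / ((r:ℝ)^2 * z)⌋₊ i : ℝ) *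
    ((⌊1 / ((r:ℝ)^2 * z)⌋₊ : ℕ) : ℝ) ^ (H - hs i / r) with hV
  have hfl : ∀ n ∈ S, ⌊1 / ((r:ℝ)^2 * (1 / ((r:ℝ)^2 * n)))⌋₊ = n := by
    intro n hn
    have h1 := hSpos n hn
    have : 1 / ((r:ℝ)^2 * (1 / ((r:ℝ)^2 * n))) = n := by field_simp
    rw [this, Nat.floor_natCast]
  have hzero := zero_est (toR (w r H)) (fun i => toR (rho r H (hs i))) (fun i => toR (A i))
    (hrel r H hr hs hinj hsH)
    (by
      obtain ⟨i, hi⟩ := hA0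
      exact ⟨i, by rw [Ne, toR, Polynomial.map_eq_zero_iff Int.cast_injective]; exact hi⟩)
    D H (H ^ 14)
    (Polynomial.natDegree_map_le.trans (w_deg r H))
    (fun i => Polynomial.natDegree_map_le.trans (rho_deg r H _))
    (fun i => Polynomial.natDegree_map_le.trans (hAd i))
    Zs
    (by
      intro z hz
      obtain ⟨n, hn, rfl⟩ := Finset.mem_image.1 hz
      have := hSpos n hn
      exact (toR_w_eval_pos r H (by positivity)).ne')
    V
    (by
      intro z hz i
      obtain ⟨n, hn, rfl⟩ := Finset.mem_image.1 hz
      have h1 := hSpos n hn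
      simp only [hV]
      rw [hfl n hn]
      have h2 : (0:ℝ) < Z n i := by exact_mod_cast hZ0 n hn i
      positivity)
    (by
      rw [hZcard, Fintype.card_fin]
      have h1 : N * H ≤ S.card * H ^ 14 := by
        calc N * H ≤ S.card * H ^ 13 * H := Nat.mul_le_mul_right _ hcard
          _ = _ := by ring
      have h2 : N * 36864 ≤ N * H := Nat.mul_le_mul_left _ hHbig
      have h3 : S.card * (H ^ 14 + 1) = S.card * H ^ 14 + S.card := by ring
      rw [h3]
      omega)
  obtain ⟨z, hz, k, hk, hne⟩ := hzero
  obtain ⟨n, hn, rfl⟩ := Finset.mem_image.1 hz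
  obtain ⟨hn1, hn2⟩ := hS n hn
  have hk' : k ≤ 2 * H ^ 14 := by
    have : H ≤ H ^ 14 := Nat.le_self_pow (by norm_num) H
    rw [Fintype.card_fin] at hk
    omega
  have hn35 : n ≤ H ^ 35 := by
    have : 2 * H ^ 34 ≤ H ^ 35 := by
      calc 2 * H ^ 34 ≤ H * H ^ 34 := Nat.mul_le_mul_right _ (by omega)
        _ = _ := by ring
    omega
  have hv := vanish r hr c C1 H N D n k hH hc1 hc hC1 hC hn35 (hN1.trans hn1) hD1 hD2 hk'
    (by nlinarith) (by omega) hs hsH hsr A hAd hA hT (Z n) (hZ n hn)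
  apply hne
  rw [← hv]
  refine Finset.sum_congr rfl fun i _ => ?_
  simp only [hV]
  rw [hfl n hn]
  simp only [toR]
  rw [stp_map]

end PFS


namespace PFS
open Polynomial

lemma coeff_linear_pow (α β : ℤ) (r i : ℕ) (hi : i ≤ r) :
    ((C α * X + C β) ^ r : ℤ[X]).coeff i = α ^ i * β ^ (r - i) * (r.choose i : ℤ) := by
  rw [add_pow, finsetSum_coeff]
  have : ∀ m ∈ Finset.range (r + 1),
      ((C α * X) ^ m * (C β) ^ (r - m) * ((r.choose m : ℕ) : ℤ[X]) : ℤ[X]).coeff i =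
        if i = m then α ^ m * β ^ (r - m) * (r.choose m : ℤ) else 0 := by
    intro m _
    have e : ((C α * X) ^ m * (C β) ^ (r - m) * ((r.choose m : ℕ) : ℤ[X]) : ℤ[X]) =
        C (α ^ m * β ^ (r - m) * (r.choose m : ℤ)) * X ^ m := by
      simp only [mul_pow, map_mul, map_pow, map_natCast, eq_natCast]; ring
    rw [e, coeff_C_mul_X_pow]
  rw [Finset.sum_congr rfl this, Finset.sum_ite_eq, if_pos (by simp; omega)]

lemma abs_eval_le (Q : ℤ[X]) (m : ℕ) (hQ : ∀ i, m < i → Q.coeff i = 0) :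
    ∃ B : ℝ, 0 ≤ B ∧ ∀ x : ℤ, |((Q.eval x : ℤ) : ℝ)| ≤ B * (1 + |(x:ℝ)|) ^ m := by
  refine ⟨∑ i ∈ Finset.range (m+1), |((Q.coeff i : ℤ) : ℝ)|, by positivity, fun x => ?_⟩
  have hd : Q.natDegree < m + 1 := by
    rw [Nat.lt_succ_iff, natDegree_le_iff_coeff_eq_zero]; exact hQ
  rw [eval_eq_sum_range' hd, Finset.sum_mul]
  push_cast
  refine (Finset.abs_sum_le_sum_abs _ _).trans (Finset.sum_le_sum fun i hi => ?_)
  rw [Finset.mem_range] at hi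
  rw [abs_mul, abs_pow]
  refine mul_le_mul_of_nonneg_left ?_ (abs_nonneg _)
  calc |(x:ℝ)| ^ i ≤ (1 + |(x:ℝ)|) ^ i := by gcongr; linarith
    _ ≤ _ := pow_le_pow_right₀ (by linarith [abs_nonneg (x:ℝ)]) (by omega)

lemma sub_pow_ge (Z g : ℝ) (hZ : 0 ≤ Z) (hg : 0 ≤ g) (r : ℕ) :
    |Z - g| * Z ^ r ≤ |Z ^ (r + 1) - g ^ (r + 1)| := by
  rw [← Commute.geom_sum₂_mul (Commute.all Z g), abs_mul, mul_comm]
  refine mul_le_mul_of_nonneg_right ?_ (abs_nonneg _)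
  rw [abs_of_nonneg (by positivity)]
  have := Finset.single_le_sum (s := Finset.range (r+1))
    (f := fun i => Z ^ i * g ^ (r + 1 - 1 - i)) (fun i _ => by positivity) (a := r) (by simp)
  simpa using this

lemma arch (P : ℤ[X]) (hP : 2 ≤ P.natDegree) (s : ℤ) (hs : s ≠ 0) :
    ∃ c C1 : ℝ, 1 ≤ c ∧ 1 ≤ C1 ∧ ∃ N1 : ℕ, ∀ n, N1 ≤ n →
      (∃ x : ℤ, s * (n.factorial : ℤ) = P.eval x) →
      ∃ Z : ℤ, 0 < Z ∧ |(Z : ℝ) - Gr P.natDegree c n| ≤ C1 / Gr P.natDegree c n := by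
  obtain ⟨m, hm⟩ : ∃ m, P.natDegree = m + 2 := ⟨P.natDegree - 2, by omega⟩
  set r := P.natDegree with hr
  set a := P.coeff r with ha
  set b := P.coeff (m + 1) with hb
  have ha0 : a ≠ 0 := by
    rw [ha, hr, coeff_natDegree, Ne, leadingCoeff_eq_zero]; rintro rfl; simp at hr; omega
  have hr0 : (r:ℤ) ≠ 0 := by exact_mod_cast (by omega : r ≠ 0)
  set Q : ℤ[X] := C ((r:ℤ) ^ r * a ^ (m + 1)) * P - (C ((r:ℤ) * a) * X + C b) ^ r with hQdef
  have hpw : (r:ℤ) ^ r = (r:ℤ) ^ (m + 1) * r := by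
    rw [← pow_succ]; congr 1
  have hQ : ∀ i, m < i → Q.coeff i = 0 := by
    intro i hi
    rw [hQdef, coeff_sub, coeff_C_mul]
    by_cases h1 : i = m + 1
    · subst h1
      have e3 : r - (m + 1) = 1 := by omega
      have e4 : r.choose (m + 1) = r := by
        rw [hm]; exact Nat.choose_succ_self_right (m + 1)
      rw [coeff_linear_pow _ _ _ _ (by omega), ← hb, e3, e4, mul_pow, hpw]
      ring
    by_cases h2 : i = r
    · have e5 : a ^ r = a ^ (m + 1) * a := by rw [hm, ← pow_succ]
      rw [h2, coeff_linear_pow _ _ _ _ le_rfl, ← ha, Nat.choose_self, Nat.sub_self, mul_pow, e5]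
      push_cast; ring
    · rw [coeff_eq_zero_of_natDegree_lt (p := P) (by omega),
        coeff_eq_zero_of_natDegree_lt (p := (C ((r:ℤ) * a) * X + C b) ^ r), mul_zero, sub_zero]
      refine lt_of_le_of_lt (natDegree_pow_le_of_le r (natDegree_linear_le)) (by omega)
  obtain ⟨B, hB0, hB⟩ := abs_eval_le Q m hQ
  set c' : ℤ := s * ((r:ℤ) ^ r * a ^ (m + 1)) with hc'
  have hc'0 : c' ≠ 0 := mul_ne_zero hs (mul_ne_zero (pow_ne_zero _ hr0) (pow_ne_zero _ ha0))
  have hc1 : (1:ℝ) ≤ |(c':ℝ)| := by exact_mod_cast Int.one_le_abs hc'0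
  set B2 : ℝ := B * (2 + |(b:ℝ)|) ^ m with hB2
  have hB20 : 0 ≤ B2 := by positivity
  refine ⟨|(c':ℝ)|, 1 + B2 * (1 + B2), hc1, by nlinarith, ⌊B2⌋₊ + 1, ?_⟩
  rintro n hn ⟨x, hx⟩
  set y : ℤ := (r:ℤ) * a * x + b with hy
  have hxy : |(x:ℝ)| ≤ |(y:ℝ)| + |(b:ℝ)| := by
    have h1 : (1:ℤ) ≤ |(r:ℤ) * a| := Int.one_le_abs (mul_ne_zero hr0 ha0)
    have h2 : |x| ≤ |y| + |b| := by
      have h3 : (r:ℤ) * a * x = y - b := by rw [hy]; ring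
      calc |x| = 1 * |x| := by ring
        _ ≤ |(r:ℤ) * a| * |x| := mul_le_mul_of_nonneg_right h1 (abs_nonneg _)
        _ = |y - b| := by rw [← abs_mul, h3]
        _ ≤ _ := abs_sub _ _
    exact_mod_cast h2
  have hQx : Q.eval x = c' * (n.factorial : ℤ) - y ^ r := by
    rw [hQdef]
    simp only [eval_sub, eval_mul, eval_C, eval_pow, eval_add, eval_X]
    rw [← hx, hc', hy]; ring
  have hQb := hB x
  rw [hQx] at hQb
  push_cast at hQb
  have hnB : B2 < n.factorial := by
    have h1 : B2 < n := (Nat.lt_floor_add_one B2).trans_le (by exact_mod_cast hn)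
    have h2 : (n:ℝ) ≤ n.factorial := by exact_mod_cast Nat.self_le_factorial n
    linarith
  have hy0 : y ≠ 0 := by
    intro h0
    rw [h0] at hQb hxy
    have hr0' : r ≠ 0 := by omega
    simp only [Int.cast_zero, zero_pow hr0', sub_zero, abs_zero, zero_add] at hQb hxy
    rw [abs_mul, abs_of_nonneg (by positivity : (0:ℝ) ≤ (n.factorial:ℝ))] at hQb
    have h1 : B * (1 + |(x:ℝ)|) ^ m ≤ B2 := by
      rw [hB2]
      gcongr B * ?_ ^ m
      linarith
    have h2 : (n.factorial : ℝ) ≤ |(c':ℝ)| * n.factorial := le_mul_of_one_le_left (by positivity) hc1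
    linarith
  have hZ1 : (1:ℝ) ≤ |(y:ℝ)| := by exact_mod_cast Int.one_le_abs hy0
  set Z := |(y:ℝ)| with hZdef
  set g := Gr r |(c':ℝ)| n with hg
  have hg0 : 0 < g := Gr_pos r hc1 n
  have hgr : g ^ r = |(c':ℝ)| * n.factorial := Gr_pow r (by omega) hc1 n
  have hb1 : B * (1 + |(x:ℝ)|) ^ m ≤ B2 * Z ^ m := by
    rw [hB2, mul_assoc, ← mul_pow]
    gcongr B * ?_ ^ m
    nlinarith [abs_nonneg (b:ℝ)]
  have hdiff : |Z ^ r - g ^ r| ≤ B2 * Z ^ m := by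
    have h1 : |Z ^ r - g ^ r| ≤ |(c':ℝ) * n.factorial - (y:ℝ) ^ r| := by
      rw [hgr, hZdef, ← abs_pow]
      have : |(c':ℝ)| * n.factorial = |(c':ℝ) * n.factorial| := by
        rw [abs_mul, abs_of_nonneg (by positivity : (0:ℝ) ≤ (n.factorial:ℝ))]
      rw [this, abs_sub_comm ((c':ℝ) * n.factorial)]
      exact abs_abs_sub_abs_le_abs_sub _ _
    exact h1.trans (hQb.trans hb1)
  have hZm : 0 < Z ^ m := by positivity
  have hkey : |Z - g| * Z ≤ B2 := by
    have h1 := sub_pow_ge Z g (by linarith) hg0.le (m + 1)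
    rw [show m + 1 + 1 = r by omega] at h1
    have h2 := h1.trans hdiff
    rw [pow_succ, ← mul_assoc, mul_right_comm] at h2
    exact le_of_mul_le_mul_right h2 hZm
  have hgZ : g ≤ Z * (1 + B2) := by
    have h1 : |Z - g| ≤ |Z - g| * Z := le_mul_of_one_le_right (abs_nonneg _) hZ1
    have h2 := neg_abs_le (Z - g)
    nlinarith
  refine ⟨|y|, abs_pos.2 hy0, ?_⟩
  rw [Int.cast_abs, ← hZdef, le_div_iff₀ hg0]
  calc |Z - g| * g ≤ |Z - g| * (Z * (1 + B2)) := mul_le_mul_of_nonneg_left hgZ (abs_nonneg _)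
    _ = |Z - g| * Z * (1 + B2) := by ring
    _ ≤ B2 * (1 + B2) := by gcongr
    _ ≤ _ := by linarith

/-- `n` has twelve companions in a short interval -/
def Good (r H : ℕ) (S : Finset ℕ) (n : ℕ) : Prop :=
  ∃ hs : Fin 12 → ℕ, Function.Injective hs ∧ (∀ i, hs i < H) ∧ (∀ i, r ∣ hs i) ∧ ∀ i, n + hs i ∈ S

open Classical in
lemma bad_card (r H N : ℕ) (hr : 0 < r) (hH : 0 < H) (S : Finset ℕ)
    (hS : ∀ n ∈ S, N ≤ n ∧ n < 2 * N) :
    (S.filter fun n => ¬ Good r H S n).card ≤ 11 * ((N / H + 2) * r) := by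
  set T := S.filter fun n => ¬ Good r H S n with hT
  have h1 := Finset.card_le_mul_card_image (f := fun n : ℕ => (n / H, n % r)) T 11 (by
    intro p hp
    by_contra hcon
    push Not at hcon
    set F := T.filter fun n => (n / H, n % r) = p with hF
    have hne : F.Nonempty := Finset.card_pos.1 (by omega)
    set n0 := F.min' hne with hn0
    have hn0F : n0 ∈ F := F.min'_mem hne
    have hn0T := (Finset.mem_filter.1 hn0F).1
    have hn0p := (Finset.mem_filter.1 hn0F).2
    refine (Finset.mem_filter.1 hn0T).2 ?_
    obtain ⟨F', hF', hcard⟩ := Finset.exists_subset_card_eq (by omega : 12 ≤ F.card)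
    have hmem : ∀ i, F'.orderEmbOfFin hcard i ∈ F := fun i =>
      hF' (Finset.orderEmbOfFin_mem _ _ _)
    have hle : ∀ i, n0 ≤ F'.orderEmbOfFin hcard i := fun i => F.min'_le _ (hmem i)
    refine ⟨fun i => F'.orderEmbOfFin hcard i - n0, ?_, ?_, ?_, ?_⟩
    · intro i j hij
      simp only at hij
      have := hle i
      have := hle j
      exact (F'.orderEmbOfFin hcard).injective (by omega)
    · intro i
      have h2 := (Finset.mem_filter.1 (hmem i)).2
      rw [← hn0p, Prod.mk.injEq] at h2
      have h3 := Nat.div_add_mod (F'.orderEmbOfFin hcard i) H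
      have h4 := Nat.div_add_mod n0 H
      have h5 := Nat.mod_lt (F'.orderEmbOfFin hcard i) hH
      rw [h2.1] at h3
      show _ - n0 < H
      omega
    · intro i
      have h2 := (Finset.mem_filter.1 (hmem i)).2
      rw [← hn0p, Prod.mk.injEq] at h2
      exact (Nat.modEq_iff_dvd' (hle i)).1 h2.2.symm
    · intro i
      have h2 := (Finset.mem_filter.1 (Finset.mem_filter.1 (hmem i)).1).1
      have := hle i
      show n0 + (_ - n0) ∈ S
      rw [Nat.add_sub_cancel' this]; exact h2)
  refine h1.trans (Nat.mul_le_mul_left _ ?_)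
  have h2 : T.image (fun n : ℕ => (n / H, n % r)) ⊆
      Finset.Icc (N / H) (N / H + N / H + 1) ×ˢ Finset.range r := by
    intro p hp
    obtain ⟨n, hn, rfl⟩ := Finset.mem_image.1 hp
    have hn' := hS n (Finset.mem_filter.1 hn).1
    rw [Finset.mem_product, Finset.mem_Icc, Finset.mem_range]
    refine ⟨⟨Nat.div_le_div_right hn'.1, ?_⟩, Nat.mod_lt _ hr⟩
    have h3 := Nat.lt_mul_div_succ N hH
    rw [← Nat.lt_succ_iff, Nat.div_lt_iff_lt_mul hH]
    nlinarith
  refine (Finset.card_le_card h2).trans ?_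
  rw [Finset.card_product, Nat.card_Icc, Finset.card_range]
  exact Nat.mul_le_mul_right _ (by generalize N / H = q; omega)

open Classical in
lemma good_card (H r N : ℕ) (S : Finset ℕ)
    (hcore : ∀ hs : Fin 12 → ℕ, Function.Injective hs → (∀ i, hs i < H) → (∀ i, r ∣ hs i) →
      ∀ S' : Finset ℕ, S' ⊆ S → (∀ n ∈ S', ∀ i, n + hs i ∈ S) → S'.card * H ^ 13 < N) :
    (S.filter fun n => Good r H S n).card * H ^ 13 ≤ H ^ 12 * N := by
  set T := S.filter fun n => Good r H S n with hT
  have hgood : ∀ n ∈ T, Good r H S n := fun n hn => (Finset.mem_filter.1 hn).2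
  choose! f hf using hgood
  have h1 := Finset.card_eq_sum_card_fiberwise (f := f) (s := T)
    (t := Fintype.piFinset fun _ : Fin 12 => Finset.range H) (by
      intro n hn
      simp only [Finset.mem_coe, Fintype.mem_piFinset, Finset.mem_range]
      exact (hf n hn).2.1)
  rw [h1, Finset.sum_mul]
  have h2 : (Fintype.piFinset fun _ : Fin 12 => Finset.range H).card = H ^ 12 := by simp
  rw [← h2]
  refine (Finset.sum_le_card_nsmul _ _ N fun hs _ => ?_).trans (by simp)
  by_cases hne : (T.filter fun n => f n = hs).Nonempty
  · obtain ⟨n0, hn0⟩ := hne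
    rw [Finset.mem_filter] at hn0
    have h3 := hf n0 hn0.1
    rw [hn0.2] at h3
    refine (hcore hs h3.1 h3.2.1 h3.2.2.1 _ ((Finset.filter_subset _ _).trans
      (Finset.filter_subset _ _)) ?_).le
    intro n hn
    rw [Finset.mem_filter] at hn
    have h4 := (hf n hn.1).2.2.2
    rw [hn.2] at h4
    exact h4
  · rw [Finset.not_nonempty_iff_eq_empty.1 hne]; simp

lemma exists_H (N B : ℕ) (hB : 2 ^ 34 ≤ B) (hN : B ^ 34 < N) :
    ∃ H : ℕ, B ≤ H ∧ H ^ 33 ≤ N ∧ N ≤ H ^ 34 := by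
  have hex : ∃ H : ℕ, N ≤ H ^ 34 := ⟨N, Nat.le_self_pow (by norm_num) N⟩
  classical
  refine ⟨Nat.find hex, ?_, ?_, Nat.find_spec hex⟩
  · by_contra hcon
    push Not at hcon
    have h1 := Nat.find_spec hex
    have h2 : Nat.find hex ^ 34 ≤ B ^ 34 := Nat.pow_le_pow_left hcon.le 34
    omega
  · have hBH : B ≤ Nat.find hex := by
      by_contra hcon
      push Not at hcon
      have h1 := Nat.find_spec hex
      have h2 : Nat.find hex ^ 34 ≤ B ^ 34 := Nat.pow_le_pow_left hcon.le 34
      omega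
    have h2 := Nat.find_min hex (m := Nat.find hex - 1) (by omega)
    push Not at h2
    set H := Nat.find hex with hH
    have h3 : H ≤ 2 * (H - 1) := by omega
    have h4 : H ^ 34 ≤ (2 * (H - 1)) ^ 34 := Nat.pow_le_pow_left h3 34
    have h5 : 2 ^ 34 * H ^ 33 ≤ 2 ^ 34 * (H - 1) ^ 34 := by
      calc 2 ^ 34 * H ^ 33 ≤ H * H ^ 33 := Nat.mul_le_mul_right _ (hB.trans hBH)
        _ = H ^ 34 := by ring
        _ ≤ _ := h4
        _ = _ := by rw [mul_pow]
    have h6 := Nat.le_of_mul_le_mul_left h5 (by norm_num)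
    omega

open Classical in
theorem main (P : ℤ[X]) (hP : 2 ≤ P.natDegree) (s : ℤ) (hs : s ≠ 0) :
    ∃ C : ℝ, 0 < C ∧ ∀ N : ℕ, 0 < N → ∀ S : Finset ℕ,
      (∀ n ∈ S, (N ≤ n ∧ n < 2 * N) ∧ ∃ x : ℤ, s * (n.factorial : ℤ) = P.eval x) →
      (S.card : ℝ) ≤ C * (N : ℝ) ^ ((33 : ℝ) / 34) := by
  obtain ⟨c, C1, hc1, hC1, N1, harch⟩ := arch P hP s hs
  set r := P.natDegree with hr
  set B : ℕ := 2 ^ 34 + 9 * 2 ^ 12 * r ^ 14 + ⌈c⌉₊ + ⌈C1⌉₊ + N1 with hB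
  refine ⟨(B:ℝ) ^ 34 + (1 + 33 * r), by positivity, fun N hN S hS => ?_⟩
  have hN1 : (1:ℝ) ≤ N := by exact_mod_cast hN
  have hpow1 : (1:ℝ) ≤ (N:ℝ) ^ ((33:ℝ) / 34) := Real.one_le_rpow hN1 (by norm_num)
  have hpow0 : (0:ℝ) ≤ (N:ℝ) ^ ((33:ℝ) / 34) := by linarith
  by_cases hNB : N ≤ B ^ 34
  · have h1 : S.card ≤ N := by
      have : S ⊆ Finset.Ico N (2 * N) := fun n hn => Finset.mem_Ico.2 (hS n hn).1
      refine (Finset.card_le_card this).trans ?_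
      rw [Nat.card_Ico]; omega
    have h2 : (S.card : ℝ) ≤ (B:ℝ) ^ 34 := by exact_mod_cast h1.trans hNB
    calc (S.card : ℝ) ≤ ((B:ℝ) ^ 34 + (1 + 33 * r)) * 1 := by
          have : (0:ℝ) ≤ 1 + 33 * (r:ℝ) := by positivity
          linarith
      _ ≤ _ := by gcongr
  push Not at hNB
  obtain ⟨H, hBH, hH33, hH34⟩ := exists_H N B (by omega) hNB
  have hH0 : 0 < H := by omega
  have hHN : H ≤ N := (Nat.le_self_pow (by norm_num) H).trans hH33
  have hcH : c ≤ H := (Nat.le_ceil c).trans (by exact_mod_cast (by omega : ⌈c⌉₊ ≤ H))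
  have hC1H : C1 ≤ H := (Nat.le_ceil C1).trans (by exact_mod_cast (by omega : ⌈C1⌉₊ ≤ H))
  have hgood := good_card H r N S (by
    intro hs' hinj hlt hdvd S' hS' hmem
    by_contra hcon
    push Not at hcon
    exact core r hP c C1 H N (by omega) hc1 hcH hC1 hC1H hH33 hH34 hs' hinj (fun i => (hlt i).le)
      hdvd S' (fun n hn => (hS n (hS' hn)).1)
      (fun n hn i => by
        have h1 := hS _ (hmem n hn i)
        exact harch _ (by omega) h1.2) hcon)
  have hbad := bad_card r H N (by omega) hH0 S (fun n hn => (hS n hn).1)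
  have hsplit := Finset.card_filter_add_card_filter_not (s := S) (fun n => Good r H S n)
  have hgood' : (S.filter fun n => Good r H S n).card * H ≤ N := by
    have : H ^ 12 * ((S.filter fun n => Good r H S n).card * H) ≤ H ^ 12 * N := by
      refine le_trans (le_of_eq ?_) hgood
      ring
    exact Nat.le_of_mul_le_mul_left this (by positivity)
  have hbad' : (S.filter fun n => ¬ Good r H S n).card * H ≤ 33 * r * N := by
    have h1 : N / H * H ≤ N := Nat.div_mul_le_self N H
    calc _ ≤ 11 * ((N / H + 2) * r) * H := Nat.mul_le_mul_right _ hbad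
      _ = 11 * r * (N / H * H + 2 * H) := by ring
      _ ≤ 11 * r * (3 * N) := Nat.mul_le_mul_left _ (by omega)
      _ = _ := by ring
  have htot : S.card * H ≤ (1 + 33 * r) * N := by
    rw [← hsplit, add_mul, add_mul, one_mul]; omega
  have htot' : (S.card : ℝ) * H ≤ (1 + 33 * r) * N := by exact_mod_cast htot
  have hHroot : (N:ℝ) ^ ((1:ℝ) / 34) ≤ H := by
    have h1 : (N:ℝ) ≤ (H:ℝ) ^ 34 := by exact_mod_cast hH34
    calc (N:ℝ) ^ ((1:ℝ) / 34) ≤ ((H:ℝ) ^ 34) ^ ((1:ℝ) / 34) := by gcongr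
      _ = H := by
        rw [← Real.rpow_natCast, ← Real.rpow_mul (by positivity)]; norm_num
  have hNsplit : (N:ℝ) = (N:ℝ) ^ ((33:ℝ) / 34) * (N:ℝ) ^ ((1:ℝ) / 34) := by
    rw [← Real.rpow_add (by linarith)]; norm_num
  have hHp : (0:ℝ) < H := by exact_mod_cast hH0
  have h2 : (S.card : ℝ) * H ≤ ((1 + 33 * r) * (N:ℝ) ^ ((33:ℝ) / 34)) * H := by
    refine htot'.trans ?_
    calc (1 + 33 * (r:ℝ)) * N = (1 + 33 * r) * ((N:ℝ) ^ ((33:ℝ) / 34) * (N:ℝ) ^ ((1:ℝ) / 34)) := by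
          rw [← hNsplit]
      _ ≤ (1 + 33 * r) * ((N:ℝ) ^ ((33:ℝ) / 34) * H) := by gcongr
      _ = _ := by ring
  have h3 := le_of_mul_le_mul_right h2 hHp
  refine h3.trans ?_
  refine mul_le_mul_of_nonneg_right ?_ hpow0
  have : (0:ℝ) ≤ (B:ℝ) ^ 34 := by positivity
  linarith

end PFS


open scoped Nat Classical

/-- **Power saving for number of solutions** (Theorem 1.1).
Let `P` be a polynomial with integer coefficients of degree `r ≥ 2` and let `s` be a nonzero
integer. Then there exists a positive constant `C`, depending only on `P` and `s`, such that for
all positive integers `N`, the number of integers `n` with `N ≤ n < 2N` for which there exists an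
integer `x` with `s·n! = P(x)` is at most `C·N^(33/34)`. -/
theorem polynomial_factorial_power_saving
    (P : Polynomial ℤ) (hP : 2 ≤ P.natDegree) (s : ℤ) (hs : s ≠ 0) :
    ∃ C : ℝ, 0 < C ∧ ∀ N : ℕ, 0 < N →
      (((Finset.Ico N (2 * N)).filter
          (fun n => ∃ x : ℤ, s * (n ! : ℤ) = P.eval x)).card : ℝ)
        ≤ C * (N : ℝ) ^ ((33 : ℝ) / 34) := by
  obtain ⟨C, hC, h⟩ := PFS.main P hP s hs
  exact ⟨C, hC, fun N hN => h N hN _ fun n hn => by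
    rw [Finset.mem_filter, Finset.mem_Ico] at hn
    exact hn⟩
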